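/- arXiv:2402.18053 — 9 statements merged into one kernel-verified Lean document; each statement's English description precedes it below -/
import Mathlib

section
/- Let G be an edge-colored graph on n vertices and let k satisfy n ≥ k ≥ 4. If e(G) + c(G) ≥ (n choose 2) + t_{n,k-2} + 2, then G contains a rainbow copy of K_k, i.e., k vertices that are pairwise adjacent such that all (k choose 2) edges among them have pairwise distinct colors. -/
/-- `t_{n,r}`: the number of edges of the Turán graph, i.e. the complete `r`-partite
graph on `n` vertices with part sizes as balanced as possible. -/
noncomputable def turanEdges (n r : ℕ) : ℕ := Nat.card (SimpleGraph.turanGraph n r).edgeSet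

/-- `S` is the vertex set of a rainbow clique of `G`: the vertices of `S` are pairwise
adjacent and the coloring `C` is injective on the edges spanned by `S`. -/
def IsRainbowClique {V : Type*} (G : SimpleGraph V) (C : Sym2 V → ℕ) (S : Finset V) : Prop :=
  (∀ u ∈ S, ∀ v ∈ S, u ≠ v → G.Adj u v) ∧
  (∀ u ∈ S, ∀ v ∈ S, ∀ x ∈ S, ∀ y ∈ S, u ≠ v → x ≠ y →
    C s(u, v) = C s(x, y) → s(u, v) = s(x, y))


theorem IsRainbowClique.insert_of {V : Type*} [DecidableEq V] {G : SimpleGraph V} {C : Sym2 V → ℕ}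
    {v : V} {S K : Finset V}
    (hadj : ∀ u ∈ S, G.Adj v u)
    (hinj : ∀ u ∈ S, ∀ w ∈ S, C s(v, u) = C s(v, w) → u = w)
    (hsat : ∀ u ∈ S, ∀ x y, G.Adj x y → v ≠ x → v ≠ y → C s(x, y) ≠ C s(v, u))
    (hKS : K ⊆ S) (hK : IsRainbowClique G C K) :
    IsRainbowClique G C (insert v K) ∧ (insert v K).card = K.card + 1 := by
  obtain ⟨h1, h2⟩ := hK
  have hv : ∀ u ∈ K, v ≠ u := fun u hu => (hadj u (hKS hu)).ne
  have hvK : v ∉ K := fun h => hv v h rfl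
  refine ⟨⟨?_, ?_⟩, Finset.card_insert_of_notMem hvK⟩
  · intro a ha b hb hab
    rw [Finset.mem_insert] at ha hb
    rcases ha with rfl | ha <;> rcases hb with rfl | hb
    · exact absurd rfl hab
    · exact hadj _ (hKS hb)
    · exact (hadj _ (hKS ha)).symm
    · exact h1 a ha b hb hab
  · have key1 : ∀ u ∈ K, ∀ x ∈ K, ∀ y ∈ K, x ≠ y → C s(x, y) ≠ C s(v, u) :=
      fun u hu x hx y hy hxy => hsat u (hKS hu) x y (h1 x hx y hy hxy) (hv x hx) (hv y hy)
    have key2 : ∀ u ∈ K, ∀ w ∈ K, C s(v, u) = C s(v, w) → u = w :=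
      fun u hu w hw => hinj u (hKS hu) w (hKS hw)
    intro a ha b hb x hx y hy hab hxy hc
    rw [Finset.mem_insert] at ha hb hx hy
    rcases ha with rfl | ha <;> rcases hb with rfl | hb <;>
    rcases hx with rfl | hx <;> rcases hy with rfl | hy <;>
    first
    | exact absurd rfl hab
    | exact absurd rfl hxy
    | exact h2 a ha b hb x hx y hy hab hxy hc
    | skip
    · rw [key2 b hb y hy hc]
    · rw [Sym2.eq_swap (a := x)] at hc ⊢
      rw [key2 b hb x hx hc]
    · exact absurd hc.symm (key1 b hb x hx y hy hxy)
    · rw [Sym2.eq_swap (a := a)] at hc ⊢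
      rw [key2 a ha y hy hc]
    · rw [Sym2.eq_swap (a := a), Sym2.eq_swap (a := x)] at hc ⊢
      rw [key2 a ha x hx hc]
    · rw [Sym2.eq_swap (a := a)] at hc
      exact absurd hc.symm (key1 a ha x hx y hy hxy)
    · exact absurd hc (key1 y hy a ha b hb hab)
    · rw [Sym2.eq_swap (a := x)] at hc
      exact absurd hc (key1 x hx a ha b hb hab)

theorem isRainbowClique_pair {V : Type*} [DecidableEq V] {G : SimpleGraph V} {C : Sym2 V → ℕ}
    {a b : V} (h : G.Adj a b) :
    IsRainbowClique G C {a, b} := by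
  constructor
  · intro u hu v hv huv
    simp only [Finset.mem_insert, Finset.mem_singleton] at hu hv
    rcases hu with rfl | rfl <;> rcases hv with rfl | rfl <;>
      first | exact absurd rfl huv | exact h | exact h.symm
  · intro u hu v hv x hx y hy huv hxy _
    simp only [Finset.mem_insert, Finset.mem_singleton] at hu hv hx hy
    rw [Sym2.eq_iff]
    grind

theorem rainbow_chain {V : Type*} [Fintype V] [DecidableEq V] {G : SimpleGraph V} {C : Sym2 V → ℕ}
    {p : ℕ} {S : V → Finset V}
    (hadj : ∀ v, ∀ u ∈ S v, G.Adj v u)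
    (hinj : ∀ v, ∀ u ∈ S v, ∀ w ∈ S v, C s(v, u) = C s(v, w) → u = w)
    (hsat : ∀ v, ∀ u ∈ S v, ∀ x y, G.Adj x y → v ≠ x → v ≠ y → C s(x, y) ≠ C s(v, u))
    (hcard : ∀ v, (S v)ᶜ.card ≤ p) (q : ℕ) (hq : 1 ≤ q) (j : ℕ) :
    ∀ W : Finset V, j * p + q ≤ W.card → ∃ W' ⊆ W, q ≤ W'.card ∧
      ∀ K ⊆ W', IsRainbowClique G C K →
        ∃ K' ⊆ W, K'.card = K.card + j ∧ IsRainbowClique G C K' := by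
  induction j with
  | zero => exact fun W h => ⟨W, subset_rfl, by simpa using h, fun K hK hr => ⟨K, hK, rfl, hr⟩⟩
  | succ j ih =>
    intro W hW
    have hne : W.Nonempty := Finset.card_pos.1 (by omega)
    obtain ⟨v, hv⟩ := hne
    have h1 : W.card ≤ (W ∩ S v).card + (S v)ᶜ.card := by
      have := Finset.card_inter_add_card_sdiff W (S v)
      have h2 : (W \ S v).card ≤ (S v)ᶜ.card := Finset.card_le_card (by
        intro x; simp)
      omega
    have h2 := hcard v
    obtain ⟨W', hW', hc, hK⟩ := ih (W ∩ S v) (by rw [add_mul] at hW; omega)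
    refine ⟨W', hW'.trans Finset.inter_subset_left, hc, fun K hKW hr => ?_⟩
    obtain ⟨K', h3, h4, h5⟩ := hK K hKW hr
    have := h5.insert_of (hadj v) (hinj v) (hsat v) (h3.trans Finset.inter_subset_right)
    refine ⟨insert v K', ?_, by omega, this.1⟩
    exact Finset.insert_subset hv (h3.trans Finset.inter_subset_left)

theorem rainbow_triangle {V : Type*} [Fintype V] [DecidableEq V] {G : SimpleGraph V}
    [DecidableRel G.Adj] {C : Sym2 V → ℕ}
    {p : ℕ} {S : V → Finset V}
    (hadj : ∀ v, ∀ u ∈ S v, G.Adj v u)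
    (hinj : ∀ v, ∀ u ∈ S v, ∀ w ∈ S v, C s(v, u) = C s(v, w) → u = w)
    (hsat : ∀ v, ∀ u ∈ S v, ∀ x y, G.Adj x y → v ≠ x → v ≠ y → C s(x, y) ≠ C s(v, u))
    (hcard : ∀ v, (S v)ᶜ.card + (G.neighborFinset v)ᶜ.card ≤ p + 1)
    (W : Finset V) (hW : p + 2 ≤ W.card) :
    ∃ K ⊆ W, K.card = 3 ∧ IsRainbowClique G C K := by
  have hne : W.Nonempty := Finset.card_pos.1 (by omega)
  obtain ⟨v, hv, hmax⟩ := Finset.exists_max_image W (fun v => (W ∩ S v).card) hne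
  have h1 : ∀ v, W.card ≤ (W ∩ S v).card + (S v)ᶜ.card := by
    intro v
    have := Finset.card_inter_add_card_sdiff W (S v)
    have h2 : (W \ S v).card ≤ (S v)ᶜ.card := Finset.card_le_card (by
      intro x; simp)
    omega
  have hpos : (W ∩ S v).Nonempty := Finset.card_pos.1 (by have := h1 v; have := hcard v; omega)
  by_cases hind : ∃ a ∈ W ∩ S v, ∃ b ∈ W ∩ S v, G.Adj a b
  · obtain ⟨a, ha, b, hb, hab⟩ := hind
    have h3 : ({a, b} : Finset V) ⊆ W ∩ S v := by
      intro x hx; simp only [Finset.mem_insert, Finset.mem_singleton] at hx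
      rcases hx with rfl | rfl <;> assumption
    have := (isRainbowClique_pair (C := C) hab).insert_of (hadj v) (hinj v) (hsat v)
      (h3.trans Finset.inter_subset_right)
    refine ⟨insert v {a, b}, Finset.insert_subset hv (h3.trans Finset.inter_subset_left), ?_, this.1⟩
    rw [this.2, Finset.card_pair hab.ne]
  · exfalso
    push Not at hind
    obtain ⟨a, ha⟩ := hpos
    have h2 : (W ∩ S v).card ≤ (G.neighborFinset a)ᶜ.card := Finset.card_le_card (by
      intro b hb
      simpa using hind a ha b hb)
    have h3 := hmax a (Finset.mem_inter.1 ha).1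
    have := h1 a
    have := hcard a
    omega

theorem turan_partition_absurd {V : Type*} [Fintype V] [DecidableEq V] {p : ℕ}
    (B : V → Finset V) (hself : ∀ v, v ∈ B v) (hc : ∀ v, (B v).card = p)
    (hdisj : ∀ v w, w ∉ B v → Disjoint (B v) (B w)) : p ∣ Fintype.card V := by
  have hsym : ∀ v w, w ∈ B v → v ∈ B w := by
    intro v w h
    by_contra h'
    exact Finset.disjoint_left.1 (hdisj w v h') (hself w) h
  have heq : ∀ v w, w ∈ B v → B w = B v := by
    intro v w h
    ext x
    constructor
    · intro hx
      by_contra h'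
      exact Finset.disjoint_left.1 (hdisj v x h') h (hsym _ _ hx)
    · intro hx
      by_contra h'
      exact Finset.disjoint_left.1 (hdisj w x h') (hsym _ _ h) (hsym _ _ hx)
  have := Finset.card_eq_sum_card_image B (Finset.univ : Finset V)
  rw [← Finset.card_univ, this]
  apply Finset.dvd_sum
  intro b hb
  obtain ⟨v, -, rfl⟩ := Finset.mem_image.1 hb
  have : (Finset.univ.filter fun x => B x = B v) = B v := by
    ext x
    simp only [Finset.mem_filter, Finset.mem_univ, true_and]
    exact ⟨fun h => h ▸ hself x, heq v x⟩
  rw [this, hc]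

theorem rainbow_core {V : Type*} [Fintype V] [DecidableEq V] {G : SimpleGraph V}
    [DecidableRel G.Adj] {C : Sym2 V → ℕ}
    {p r : ℕ} {S : V → Finset V} (hr : 2 ≤ r) (hn : r + 3 ≤ Fintype.card V)
    (hp : r * p + 1 ≤ Fintype.card V)
    (hadj : ∀ v, ∀ u ∈ S v, G.Adj v u)
    (hinj : ∀ v, ∀ u ∈ S v, ∀ w ∈ S v, C s(v, u) = C s(v, w) → u = w)
    (hsat : ∀ v, ∀ u ∈ S v, ∀ x y, G.Adj x y → v ≠ x → v ≠ y → C s(x, y) ≠ C s(v, u))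
    (hcard : ∀ v, (S v)ᶜ.card + (G.neighborFinset v)ᶜ.card ≤ p + 1) :
    ∃ K : Finset V, K.card = r + 2 ∧ IsRainbowClique G C K := by
  have hx : ∀ v, 1 ≤ (G.neighborFinset v)ᶜ.card := fun v =>
    Finset.card_pos.2 ⟨v, by simp⟩
  have hy : ∀ v, (S v)ᶜ.card ≤ p := fun v => by have := hx v; have := hcard v; omega
  obtain ⟨r, rfl⟩ := Nat.exists_eq_add_of_le' hr
  by_cases h1 : (r + 2) * p + 2 ≤ Fintype.card V
  · obtain ⟨W, -, hW, hK⟩ := rainbow_chain hadj hinj hsat hy (p + 2) (by omega) (r + 1) Finset.univ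
      (by rw [Finset.card_univ]; linarith)
    obtain ⟨K, hKW, h3, hKr⟩ := rainbow_triangle hadj hinj hsat hcard W hW
    obtain ⟨K', -, h4, h5⟩ := hK K hKW hKr
    exact ⟨K', by omega, h5⟩
  have hn' : Fintype.card V = (r + 2) * p + 1 := by omega
  have hSc : ∀ v, (S v).card + (S v)ᶜ.card = Fintype.card V := fun v => Finset.card_add_card_compl _
  by_cases h2 : ∃ v, (S v)ᶜ.card + 1 ≤ p
  · obtain ⟨v, hv⟩ := h2
    obtain ⟨W, hWS, hW, hK⟩ := rainbow_chain hadj hinj hsat hy (p + 2) (by omega) r (S v)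
      (by have := hSc v; linarith)
    obtain ⟨K, hKW, h3, hKr⟩ := rainbow_triangle hadj hinj hsat hcard W hW
    obtain ⟨K', h6, h4, h5⟩ := hK K hKW hKr
    have := h5.insert_of (hadj v) (hinj v) (hsat v) h6
    exact ⟨_, by omega, this.1⟩
  push Not at h2
  have hyp : ∀ v, (S v)ᶜ.card = p := fun v => by have := hy v; have := h2 v; omega
  have hcomplete : ∀ a b, a ≠ b → G.Adj a b := by
    intro a b hab
    by_contra h
    have : 2 ≤ (G.neighborFinset a)ᶜ.card := by
      rw [← Finset.card_pair hab]
      apply Finset.card_le_card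
      intro x hx
      simp only [Finset.mem_insert, Finset.mem_singleton] at hx
      rcases hx with rfl | rfl <;> simpa using h
    have := hcard a
    have := hyp a
    omega
  have hex : ∃ v w, w ∈ S v ∧ ¬ Disjoint (S v)ᶜ (S w)ᶜ := by
    by_contra h
    push Not at h
    have hd := turan_partition_absurd (fun v => (S v)ᶜ) (p := p)
      (fun v => by simpa using fun h : v ∈ S v => (hadj v v h).ne rfl) hyp
      (fun v w hw => h v w (by simpa using hw))
    rw [hn'] at hd
    have := (Nat.dvd_add_right (Dvd.intro_left (r+2) rfl)).1 hd
    have : p = 1 := Nat.dvd_one.1 this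
    subst this
    omega
  obtain ⟨v, w, hw, hvw⟩ := hex
  have hI : r * p + 2 ≤ (S v ∩ S w).card := by
    have h3 := Finset.card_union_add_card_inter (S v)ᶜ (S w)ᶜ
    have h4 : 1 ≤ ((S v)ᶜ ∩ (S w)ᶜ).card := by
      apply Finset.card_pos.2
      rwa [Finset.nonempty_iff_ne_empty, Ne, ← Finset.disjoint_iff_inter_eq_empty]
    rw [← Finset.compl_inter] at h3
    have h5 := Finset.card_add_card_compl (S v ∩ S w)
    have := hyp v
    have := hyp w
    linarith
  obtain ⟨W, hWS, hW, hK⟩ := rainbow_chain hadj hinj hsat hy 2 (by omega) r _ hI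
  obtain ⟨a, ha, b, hb, hab⟩ := Finset.one_lt_card.1 hW
  obtain ⟨K, hK1, hK2, hK3⟩ := hK {a, b} (by
      intro x hx; simp only [Finset.mem_insert, Finset.mem_singleton] at hx
      rcases hx with rfl | rfl <;> assumption) (isRainbowClique_pair (hcomplete a b hab))
  rw [Finset.card_pair hab] at hK2
  have i1 := hK3.insert_of (hadj w) (hinj w) (hsat w) (hK1.trans Finset.inter_subset_right)
  have i2 := i1.1.insert_of (hadj v) (hinj v) (hsat v)
    (Finset.insert_subset hw (hK1.trans Finset.inter_subset_left))
  exact ⟨_, by omega, i2.1⟩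

theorem turanEdges_eq (n r : ℕ) [DecidableRel (SimpleGraph.turanGraph n r).Adj] :
    turanEdges n r = (SimpleGraph.turanGraph n r).edgeFinset.card := by
  rw [turanEdges, Nat.card_eq_fintype_card, SimpleGraph.edgeFinset_card]

theorem turanEdges_small (n r : ℕ) (h : n ≤ r) : turanEdges n r = n.choose 2 := by
  classical
  rw [turanEdges, SimpleGraph.turanGraph_eq_top.2 (Or.inr h), Nat.card_eq_fintype_card,
    ← SimpleGraph.edgeFinset_card, SimpleGraph.card_edgeFinset_top_eq_card_choose_two]
  simp

theorem turanEdges_add (n r : ℕ) :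
    turanEdges (n + r) r = turanEdges n r + n * (r - 1) + r.choose 2 := by
  rw [turanEdges_eq, turanEdges_eq, SimpleGraph.card_edgeFinset_turanGraph_add]

theorem turanEdges_succ (r : ℕ) (hr : 0 < r) (n : ℕ) :
    turanEdges (n + 1) r + n / r = turanEdges n r + n := by
  induction n using Nat.strong_induction_on with
  | _ n ih =>
    by_cases h : n < r
    · rw [turanEdges_small _ _ h, turanEdges_small _ _ h.le, Nat.div_eq_of_lt h,
        Nat.choose_succ_succ' n 1]
      simp; omega
    · obtain ⟨n, rfl⟩ := Nat.exists_eq_add_of_le' (not_lt.1 h)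
      have := ih n (by omega)
      rw [show n + r + 1 = n + 1 + r by ring, turanEdges_add, turanEdges_add,
        Nat.add_div_right _ hr, Nat.succ_mul n]
      omega

theorem edges_delete {V : Type*} [Fintype V] [DecidableEq V] (G : SimpleGraph V)
    [DecidableRel G.Adj] (v : V) :
    Sym2.map (Subtype.val : {u // u ≠ v} → V) '' (G.comap (Subtype.val : {u // u ≠ v} → V)).edgeSet
      = ((G.edgeFinset.filter (fun e => v ∉ e) : Finset (Sym2 V)) : Set (Sym2 V)) := by
  ext e
  induction e using Sym2.ind with
  | _ x y =>
    simp only [Set.mem_image, Finset.coe_filter, SimpleGraph.mem_edgeFinset, Set.mem_setOf_eq,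
      SimpleGraph.mem_edgeSet, Sym2.mem_iff]
    constructor
    · rintro ⟨e, he, h⟩
      induction e using Sym2.ind with
      | _ a b =>
        rw [← SimpleGraph.mem_edgeSet, ← Sym2.mem_iff, ← h]
        refine ⟨he, ?_⟩
        simp only [Sym2.map_mk, Sym2.mem_iff, not_or]
        exact ⟨a.2.symm, b.2.symm⟩
    · rintro ⟨h1, h2⟩
      push Not at h2
      exact ⟨s(⟨x, h2.1.symm⟩, ⟨y, h2.2.symm⟩), h1, rfl⟩

theorem card_edges_filter {V : Type*} [Fintype V] [DecidableEq V] (G : SimpleGraph V)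
    [DecidableRel G.Adj] (v : V) :
    G.edgeFinset.card = (G.edgeFinset.filter (fun e => v ∉ e)).card + (G.neighborFinset v).card := by
  rw [SimpleGraph.card_neighborFinset_eq_degree, ← SimpleGraph.card_incidenceFinset_eq_degree,
    SimpleGraph.incidenceFinset_eq_filter, add_comm, Finset.card_filter_add_card_filter_not]

theorem exists_sat {V : Type*} [Fintype V] [DecidableEq V] (G : SimpleGraph V)
    [DecidableRel G.Adj] (C : Sym2 V → ℕ) (v : V) : ∃ S : Finset V,
    (∀ u ∈ S, G.Adj v u) ∧
    (∀ u ∈ S, ∀ w ∈ S, C s(v, u) = C s(v, w) → u = w) ∧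
    (∀ u ∈ S, ∀ x y, G.Adj x y → v ≠ x → v ≠ y → C s(x, y) ≠ C s(v, u)) ∧
    (G.edgeFinset.image C).card = ((G.edgeFinset.filter (fun e => v ∉ e)).image C).card + S.card := by
  set T := G.edgeFinset.image C \ (G.edgeFinset.filter (fun e => v ∉ e)).image C with hT
  have h : ∀ c ∈ T, ∃ u, G.Adj v u ∧ C s(v, u) = c := by
    intro c hc
    rw [hT, Finset.mem_sdiff] at hc
    obtain ⟨h1, h2⟩ := hc
    obtain ⟨e, he, rfl⟩ := Finset.mem_image.1 h1
    have hv : v ∈ e := by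
      by_contra hv
      exact h2 (Finset.mem_image_of_mem _ (Finset.mem_filter.2 ⟨he, hv⟩))
    obtain ⟨u, rfl⟩ := hv
    exact ⟨u, by simpa using he, rfl⟩
  have : Nonempty V := ⟨v⟩
  choose! f hf1 hf2 using h
  refine ⟨T.image f, ?_, ?_, ?_, ?_⟩
  · intro u hu
    obtain ⟨c, hc, rfl⟩ := Finset.mem_image.1 hu
    exact hf1 c hc
  · intro u hu w hw huw
    obtain ⟨c, hc, rfl⟩ := Finset.mem_image.1 hu
    obtain ⟨d, hd, rfl⟩ := Finset.mem_image.1 hw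
    rw [hf2 c hc, hf2 d hd] at huw
    rw [huw]
  · intro u hu x y hxy hx hy he
    obtain ⟨c, hc, rfl⟩ := Finset.mem_image.1 hu
    rw [hf2 c hc] at he
    rw [hT, Finset.mem_sdiff] at hc
    apply hc.2
    rw [← he]
    apply Finset.mem_image_of_mem
    simp [hxy, hx, hy]
  · have hcard : (T.image f).card = T.card := by
      apply Finset.card_image_of_injOn
      intro c hc d hd hcd
      rw [← hf2 c hc, ← hf2 d hd, hcd]
    have hsub : (G.edgeFinset.filter (fun e => v ∉ e)).image C ⊆ G.edgeFinset.image C :=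
      Finset.image_subset_image (Finset.filter_subset _ _)
    have := Finset.card_sdiff_add_card_eq_card hsub
    rw [hcard, hT]
    omega

theorem rainbow_aux (r : ℕ) (hr : 2 ≤ r) (n : ℕ) (hn : r + 2 ≤ n) :
    ∀ {V : Type*} [Fintype V] (_ : Fintype.card V = n) (G : SimpleGraph V) (C : Sym2 V → ℕ)
    (_ : Nat.card G.edgeSet + Nat.card (C '' G.edgeSet) ≥ n.choose 2 + turanEdges n r + 2),
    ∃ S : Finset V, S.card = r + 2 ∧ IsRainbowClique G C S := by
  induction n, hn using Nat.le_induction with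
  | base =>
    intro V _ hV G C h
    classical
    have ht : turanEdges (r + 2) r + 2 = (r + 2).choose 2 := by
      have h1 := turanEdges_succ r (by omega) r
      have h2 := turanEdges_succ r (by omega) (r + 1)
      rw [Nat.div_self (by omega), turanEdges_small r r le_rfl] at h1
      have h3 : (r + 1) / r = 1 := by
        rw [Nat.add_div_left 1 (by omega), Nat.div_eq_of_lt (by omega)]
      rw [h3] at h2
      have h4 := Nat.choose_succ_succ' (r + 1) 1
      have h5 := Nat.choose_succ_succ' r 1
      simp only [Nat.choose_one_right, Nat.reduceAdd] at h4 h5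
      rw [show r + 1 + 1 = r + 2 by ring] at h2 h4
      omega
    rw [Nat.card_eq_fintype_card, ← SimpleGraph.edgeFinset_card,
      ← SimpleGraph.coe_edgeFinset, ← Finset.coe_image, Nat.card_coe_set_eq,
      Set.ncard_coe_finset] at h
    have h1 := G.card_edgeFinset_le_card_choose_two
    rw [hV] at h1
    have h2 := Finset.card_image_le (s := G.edgeFinset) (f := C)
    have hinj := Finset.card_image_iff.1 (by omega : (G.edgeFinset.image C).card = G.edgeFinset.card)
    have htop : G.edgeFinset = (⊤ : SimpleGraph V).edgeFinset := by
      apply Finset.eq_of_subset_of_card_le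
      · exact SimpleGraph.edgeFinset_mono le_top
      · rw [SimpleGraph.card_edgeFinset_top_eq_card_choose_two, hV]; omega
    have hG : G = ⊤ := SimpleGraph.edgeFinset_inj.1 htop
    subst hG
    refine ⟨Finset.univ, by rw [Finset.card_univ, hV], fun u _ v _ huv => huv, ?_⟩
    intro u _ v _ x _ y _ huv hxy hc
    exact hinj (by simpa using huv) (by simpa using hxy) hc
  | succ n hn ih =>
    intro V _ hV G C h
    classical
    choose S hadj hinj hsat hcol using exists_sat G C
    have ht := turanEdges_succ r (by omega) n
    have hch := Nat.choose_succ_succ' n 1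
    simp only [Nat.choose_one_right, Nat.reduceAdd] at hch
    rw [Nat.card_eq_fintype_card, ← SimpleGraph.edgeFinset_card,
      ← SimpleGraph.coe_edgeFinset, ← Finset.coe_image, Nat.card_coe_set_eq,
      Set.ncard_coe_finset] at h
    have hdiv : n / r ≤ n := Nat.div_le_self _ _
    by_cases hv : ∃ v, (S v).card + (G.neighborFinset v).card + n / r ≤ 2 * n
    · obtain ⟨v, hv⟩ := hv
      have he := card_edges_filter G v
      have hc := hcol v
      have hdel := edges_delete G v
      set f : {u // u ≠ v} → V := Subtype.val with hf
      have hfi : Function.Injective f := Subtype.val_injective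
      obtain ⟨K, hK1, hK2, hK3⟩ := ih (V := {u // u ≠ v})
        (by rw [Fintype.card_subtype_compl]; simp [hV]) (G.comap f) (C ∘ Sym2.map f) (by
          rw [Set.image_comp, hdel, ← Finset.coe_image, Nat.card_coe_set_eq (α := ℕ),
            Set.ncard_coe_finset, Nat.card_coe_set_eq,
            ← Set.ncard_image_of_injective _ (Sym2.map.injective hfi), hdel, Set.ncard_coe_finset]
          omega)
      refine ⟨K.map ⟨f, hfi⟩, by rw [Finset.card_map, hK1], ?_, ?_⟩
      · intro a ha b hb hab
        obtain ⟨a, hak, rfl⟩ := Finset.mem_map.1 ha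
        obtain ⟨b, hbk, rfl⟩ := Finset.mem_map.1 hb
        exact hK2 a hak b hbk (fun h => hab (by rw [h]))
      · intro a ha b hb x hx y hy hab hxy hc
        obtain ⟨a, hak, rfl⟩ := Finset.mem_map.1 ha
        obtain ⟨b, hbk, rfl⟩ := Finset.mem_map.1 hb
        obtain ⟨x, hxk, rfl⟩ := Finset.mem_map.1 hx
        obtain ⟨y, hyk, rfl⟩ := Finset.mem_map.1 hy
        have := hK3 a hak b hbk x hxk y hyk (fun h => hab (by rw [h])) (fun h => hxy (by rw [h])) hc
        exact congrArg (Sym2.map f) this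
    · push Not at hv
      refine rainbow_core (p := n / r) (S := S) hr (by omega) ?_ hadj hinj hsat ?_
      · rw [hV]
        have := Nat.mul_div_le n r
        omega
      · intro v
        have := hv v
        have h1 := Finset.card_add_card_compl (S v)
        have h2 := Finset.card_add_card_compl (G.neighborFinset v)
        omega

/-- If `e(G) + c(G) ≥ (n choose 2) + t_{n,k-2} + 2` with `n ≥ k ≥ 4`,
then `G` contains a rainbow `K_k`. -/
theorem rainbow_clique_of_edges_add_colors {V : Type*} [Fintype V] (n k : ℕ)
    (hV : Fintype.card V = n) (hk : 4 ≤ k) (hkn : k ≤ n)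
    (G : SimpleGraph V) (C : Sym2 V → ℕ)
    (h : Nat.card G.edgeSet + Nat.card (C '' G.edgeSet)
      ≥ n.choose 2 + turanEdges n (k - 2) + 2) :
    ∃ S : Finset V, S.card = k ∧ IsRainbowClique G C S := by
  obtain ⟨r, rfl⟩ : ∃ r, k = r + 2 := ⟨k - 2, by omega⟩
  exact rainbow_aux r (by omega) n hkn hV G C h
end

section
/- Let m ≥ 1 and let G be an edge-colored graph on n ≥ 3m vertices. If e(G) + c(G) ≥ ((n - 3(m-1)) choose 2) + (n - 3(m-1)) + 3(m-1)(2n-1) - 9(m-1)^2, then G contains m pairwise vertex-disjoint rainbow triangles. -/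
open Classical in
noncomputable def edgesIn {V : Type*} [Fintype V] (G : SimpleGraph V) (W : Finset V) :
    Finset (Sym2 V) :=
  Finset.univ.filter (fun e => e ∈ G.edgeSet ∧ ∀ x ∈ e, x ∈ W)

open Classical in
noncomputable def nbrIn {V : Type*} [Fintype V] (G : SimpleGraph V) (W : Finset V) (v : V) :
    Finset V :=
  W.filter (fun u => G.Adj v u)

open Classical in
noncomputable def satIn {V : Type*} [Fintype V] (G : SimpleGraph V) (C : Sym2 V → ℕ)
    (W : Finset V) (v : V) : Finset ℕ :=
  (edgesIn G W).image C \ (edgesIn G (W.erase v)).image C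

noncomputable def totIn {V : Type*} [Fintype V] (G : SimpleGraph V) (C : Sym2 V → ℕ)
    (W : Finset V) : ℕ :=
  (edgesIn G W).card + ((edgesIn G W).image C).card

lemma mem_edgesIn {V : Type*} [Fintype V] (G : SimpleGraph V) (W : Finset V) (a b : V) :
    s(a, b) ∈ edgesIn G W ↔ G.Adj a b ∧ a ∈ W ∧ b ∈ W := by
  simp [edgesIn]

open Classical in
lemma edgesIn_sub {V : Type*} [Fintype V] (G : SimpleGraph V) (W : Finset V) (v : V) :
    edgesIn G W ⊆ edgesIn G (W.erase v) ∪ (nbrIn G W v).image (fun u => s(v, u)) := by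
  intro e
  induction e with | _ a b
  simp only [Finset.mem_union, mem_edgesIn, Finset.mem_image, nbrIn, Finset.mem_filter,
    Finset.mem_erase]
  rintro ⟨h, ha, hb⟩
  by_cases hav : a = v
  · subst hav
    exact Or.inr ⟨b, ⟨hb, h⟩, rfl⟩
  by_cases hbv : b = v
  · subst hbv
    exact Or.inr ⟨a, ⟨ha, h.symm⟩, Sym2.eq_swap⟩
  exact Or.inl ⟨h, ⟨hav, ha⟩, hbv, hb⟩

open Classical in
lemma totIn_le {V : Type*} [Fintype V] (G : SimpleGraph V) (C : Sym2 V → ℕ)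
    (W : Finset V) (v : V) :
    totIn G C W ≤ totIn G C (W.erase v) + ((nbrIn G W v).card + (satIn G C W v).card) := by
  have h1 := (Finset.card_le_card (edgesIn_sub G W v)).trans (Finset.card_union_le _ _)
  have h2 : ((nbrIn G W v).image (fun u => s(v, u))).card ≤ (nbrIn G W v).card :=
    Finset.card_image_le
  have h3 : ((edgesIn G W).image C).card ≤ ((edgesIn G (W.erase v)).image C).card
      + (satIn G C W v).card := by
    have := Finset.card_le_card_sdiff_add_card (t := (edgesIn G (W.erase v)).image C)
      (s := (edgesIn G W).image C)
    unfold satIn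
    omega
  unfold totIn
  omega

lemma sat_rep {V : Type*} [Fintype V] (G : SimpleGraph V) (C : Sym2 V → ℕ)
    (W : Finset V) (v : V) (c : ℕ) (hc : c ∈ satIn G C W v) :
    ∃ u ∈ nbrIn G W v, C s(v, u) = c := by
  classical
  simp only [satIn, Finset.mem_sdiff, Finset.mem_image] at hc
  obtain ⟨⟨e, he, rfl⟩, h2⟩ := hc
  have := edgesIn_sub G W v he
  rw [Finset.mem_union] at this
  rcases this with h | h
  · exact absurd ⟨e, h, rfl⟩ h2
  · obtain ⟨u, hu, rfl⟩ := Finset.mem_image.1 h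
    exact ⟨u, hu, rfl⟩

lemma sat_le {V : Type*} [Fintype V] (G : SimpleGraph V) (C : Sym2 V → ℕ)
    (W : Finset V) (v : V) : (satIn G C W v).card ≤ (nbrIn G W v).card := by
  classical
  refine (Finset.card_le_card ?_).trans
    (Finset.card_image_le (s := nbrIn G W v) (f := fun u => C s(v, u)))
  intro c hc
  obtain ⟨u, hu, h⟩ := sat_rep G C W v c hc
  exact Finset.mem_image.2 ⟨u, hu, h⟩

lemma nbr_lt {V : Type*} [Fintype V] (G : SimpleGraph V)
    (W : Finset V) (v : V) (hv : v ∈ W) : (nbrIn G W v).card + 1 ≤ W.card := by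
  classical
  have : nbrIn G W v ⊆ W.erase v := by
    intro u hu
    simp only [nbrIn, Finset.mem_filter] at hu
    exact Finset.mem_erase.2 ⟨hu.2.ne', hu.1⟩
  have := Finset.card_le_card this
  rw [Finset.card_erase_of_mem hv] at this
  have := Finset.card_pos.2 ⟨v, hv⟩
  omega

lemma exists_low {V : Type*} [Fintype V] (G : SimpleGraph V) (C : Sym2 V → ℕ)
    (W : Finset V) (hW : W.Nonempty)
    (hno : ∀ a ∈ W, ∀ b ∈ W, ∀ c ∈ W, G.Adj a b → G.Adj a c → G.Adj b c →
      C s(a, b) ≠ C s(a, c) → C s(a, b) ≠ C s(b, c) → C s(a, c) ≠ C s(b, c) → False) :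
    ∃ v ∈ W, (nbrIn G W v).card + (satIn G C W v).card ≤ W.card := by
  classical
  by_contra! hcon
  obtain ⟨v, hv, hmax⟩ := Finset.exists_max_image W (fun v => (satIn G C W v).card) hW
  have : Nonempty V := ⟨v⟩
  choose! r hr1 hr2 using sat_rep G C W v
  have hinj : Set.InjOn r ((satIn G C W v : Finset ℕ) : Set ℕ) := by
    intro a ha b hb h
    rw [← hr2 a ha, ← hr2 b hb, h]
  have hcard : ((satIn G C W v).image r).card = (satIn G C W v).card :=
    Finset.card_image_of_injOn hinj
  have hpos : 0 < (satIn G C W v).card := by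
    have := hcon v hv
    have := nbr_lt G W v hv
    omega
  obtain ⟨c, hc⟩ := Finset.card_pos.1 hpos
  have hu := hr1 c hc
  have huc := hr2 c hc
  set u := r c with hudef
  simp only [nbrIn, Finset.mem_filter] at hu
  have hdisj : Disjoint (nbrIn G W u) ((satIn G C W v).image r) := by
    rw [Finset.disjoint_left]
    intro w hw hw2
    obtain ⟨d, hd, rfl⟩ := Finset.mem_image.1 hw2
    have hwv := hr1 d hd
    have hwd := hr2 d hd
    simp only [nbrIn, Finset.mem_filter] at hw hwv
    have hmem : s(u, r d) ∈ edgesIn G (W.erase v) := by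
      rw [mem_edgesIn]
      exact ⟨hw.2, Finset.mem_erase.2 ⟨hu.2.ne', hu.1⟩, Finset.mem_erase.2 ⟨hwv.2.ne', hw.1⟩⟩
    have hmem2 := Finset.mem_image_of_mem C hmem
    refine hno v hv u hu.1 (r d) hw.1 hu.2 hwv.2 hw.2 ?_ ?_ ?_
    · rw [huc, hwd]
      rintro rfl
      exact hw.2.ne rfl
    · rw [huc]
      intro hh
      rw [← hh] at hmem2
      exact (Finset.mem_sdiff.1 hc).2 hmem2
    · rw [hwd]
      intro hh
      rw [← hh] at hmem2
      exact (Finset.mem_sdiff.1 hd).2 hmem2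
  have hsub : nbrIn G W u ∪ (satIn G C W v).image r ⊆ W := by
    apply Finset.union_subset
    · exact Finset.filter_subset _ _
    · intro x hx
      obtain ⟨d, hd, rfl⟩ := Finset.mem_image.1 hx
      exact (Finset.mem_filter.1 (hr1 d hd)).1
  have h1 := Finset.card_le_card hsub
  rw [Finset.card_union_of_disjoint hdisj, hcard] at h1
  have h2 := hcon u hu.1
  have h3 := hmax u hu.1
  omega

lemma tot_bound {V : Type*} [Fintype V] (G : SimpleGraph V) (C : Sym2 V → ℕ) (k : ℕ) :
    ∀ (W : Finset V), W.card = k + 1 →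
    (∀ a ∈ W, ∀ b ∈ W, ∀ c ∈ W, G.Adj a b → G.Adj a c → G.Adj b c →
      C s(a, b) ≠ C s(a, c) → C s(a, b) ≠ C s(b, c) → C s(a, c) ≠ C s(b, c) → False) →
    2 * totIn G C W + 2 ≤ (k + 1) * (k + 2) := by
  classical
  induction k with
  | zero =>
    intro W hW _
    obtain ⟨v, rfl⟩ := Finset.card_eq_one.1 hW
    have : edgesIn G {v} = ∅ := by
      ext e
      induction e with | _ a b
      rw [mem_edgesIn]
      simp only [Finset.mem_singleton, Finset.notMem_empty, iff_false]
      rintro ⟨h, rfl, rfl⟩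
      exact h.ne rfl
    simp [totIn, this]
  | succ k ih =>
    intro W hW hno
    obtain ⟨v, hv, hlow⟩ := exists_low G C W (Finset.card_pos.1 (by omega)) hno
    have h1 := ih (W.erase v) (by rw [Finset.card_erase_of_mem hv]; omega)
      (fun a ha b hb c hc => hno a (Finset.mem_of_mem_erase ha) b (Finset.mem_of_mem_erase hb) c
        (Finset.mem_of_mem_erase hc))
    have h2 := totIn_le G C W v
    rw [hW] at hlow
    nlinarith

lemma tot_remove {V : Type*} [Fintype V] (G : SimpleGraph V) (C : Sym2 V → ℕ) (T : Finset V)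
    (k : ℕ) : ∀ W : Finset V, T ⊆ W → W.card = T.card + k →
    (totIn G C W : ℤ) + T.card * (T.card - 1) ≤ totIn G C T + W.card * (W.card - 1) := by
  classical
  induction k with
  | zero =>
    intro W hTW hc
    have : T = W := Finset.eq_of_subset_of_card_le hTW (by omega)
    subst this
    exact le_rfl
  | succ k ih =>
    intro W hTW hc
    obtain ⟨v, hv, hvT⟩ := Finset.exists_mem_notMem_of_card_lt_card (s := T) (t := W) (by omega)
    have hcard : (W.erase v).card = T.card + k := by
      rw [Finset.card_erase_of_mem hv]; omega
    have h1 := ih (W.erase v) (fun x hx => Finset.mem_erase.2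
      ⟨fun h => hvT (h ▸ hx), hTW hx⟩) hcard
    have h2 := totIn_le G C W v
    have h3 := sat_le G C W v
    have h4 := nbr_lt G W v hv
    have h5 : (totIn G C W : ℤ) ≤ totIn G C (W.erase v) + 2 * (W.card - 1) := by omega
    rw [hcard] at h1
    rw [hc] at h5 ⊢
    push_cast at *
    nlinarith

lemma rainbow_of {V : Type*} [DecidableEq V] (G : SimpleGraph V) (C : Sym2 V → ℕ) (a b c : V)
    (h1 : G.Adj a b) (h2 : G.Adj a c) (h3 : G.Adj b c) (h4 : C s(a, b) ≠ C s(a, c))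
    (h5 : C s(a, b) ≠ C s(b, c)) (h6 : C s(a, c) ≠ C s(b, c)) :
    IsRainbowClique G C {a, b, c} := by
  have e1 : s(b, a) = s(a, b) := Sym2.eq_swap
  have e2 : s(c, a) = s(a, c) := Sym2.eq_swap
  have e3 : s(c, b) = s(b, c) := Sym2.eq_swap
  constructor
  · intro u hu v hv huv
    simp only [Finset.mem_insert, Finset.mem_singleton] at hu hv
    rcases hu with rfl | rfl | rfl <;> rcases hv with rfl | rfl | rfl <;>
      first
      | exact absurd rfl huv
      | assumption
      | (apply SimpleGraph.Adj.symm; assumption)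
  · intro u hu v hv x hx y hy huv hxy
    simp only [Finset.mem_insert, Finset.mem_singleton] at hu hv hx hy
    have key : ∀ u v : V, (u = a ∨ u = b ∨ u = c) → (v = a ∨ v = b ∨ v = c) → u ≠ v →
        s(u, v) = s(a, b) ∨ s(u, v) = s(a, c) ∨ s(u, v) = s(b, c) := by
      clear huv hxy hu hv hx hy
      rintro u v (rfl | rfl | rfl) (rfl | rfl | rfl) h <;> simp_all
    rcases key u v hu hv huv with h | h | h <;> rcases key x y hx hy hxy with h' | h' | h' <;>
      rw [h, h'] <;> intro hh <;> first | rfl | exact absurd hh (by assumption) | exact absurd hh.symm (by assumption)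

/-- If `m ≥ 1`, `n ≥ 3m` and
`e(G) + c(G) ≥ C(n-3(m-1), 2) + (n-3(m-1)) + 3(m-1)(2n-1) - 9(m-1)²`,
then `G` contains `m` pairwise vertex-disjoint rainbow triangles. -/
theorem disjoint_rainbow_triangles_of_edges_add_colors {V : Type*} [Fintype V] (n m : ℕ)
    (hm : 1 ≤ m) (hV : Fintype.card V = n) (hn : 3 * m ≤ n)
    (G : SimpleGraph V) (C : Sym2 V → ℕ)
    (h : Nat.card G.edgeSet + Nat.card (C '' G.edgeSet)
      ≥ (n - 3 * (m - 1)).choose 2 + (n - 3 * (m - 1))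
        + (3 * (m - 1) * (2 * n - 1) - 9 * (m - 1) ^ 2)) :
    ∃ S : Fin m → Finset V, (∀ i, (S i).card = 3) ∧ (∀ i, IsRainbowClique G C (S i)) ∧
      ∀ i j, i ≠ j → Disjoint (S i) (S j) := by
  classical
  have hE : (G.edgeSet : Set (Sym2 V)) = (edgesIn G Finset.univ : Finset (Sym2 V)) := by
    ext e
    simp [edgesIn]
  have htot : Nat.card G.edgeSet + Nat.card (C '' G.edgeSet) = totIn G C Finset.univ := by
    rw [hE, ← Finset.coe_image, Nat.card_coe_set_eq, Nat.card_coe_set_eq, Set.ncard_coe_finset,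
      Set.ncard_coe_finset]
    rfl
  rw [htot] at h
  obtain ⟨k, rfl⟩ : ∃ k, m = k + 1 := ⟨m - 1, by omega⟩
  obtain ⟨t, rfl⟩ : ∃ t, n = t + 3 * k := ⟨n - 3 * k, by omega⟩
  have ht : 3 ≤ t := by omega
  have hbound : (t : ℤ) * (t + 1) + 2 * (3 * k * (2 * (t + 3 * k) - 1) - 9 * k ^ 2)
      ≤ 2 * totIn G C Finset.univ := by
    have e1 : t + 3 * k - 3 * (k + 1 - 1) = t := by omega
    have e2 : k + 1 - 1 = k := by omega
    rw [e1, e2] at h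
    have hch : t.choose 2 * 2 = t * (t - 1) := by
      rw [Nat.choose_two_right]
      exact Nat.div_mul_cancel (Nat.even_mul_pred_self t).two_dvd
    have hs : 3 * k * (2 * (t + 3 * k) - 1) - 9 * k ^ 2
        = 3 * k * (2 * t - 1) + 9 * k ^ 2 := by
      obtain ⟨q, rfl⟩ : ∃ q, t = q + 1 := ⟨t - 1, by omega⟩
      have a1 : 2 * (q + 1 + 3 * k) - 1 = 2 * q + 1 + 6 * k := by omega
      have a2 : 2 * (q + 1) - 1 = 2 * q + 1 := by omega
      rw [a1, a2]
      apply Nat.sub_eq_of_eq_add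
      ring
    rw [hs] at h
    obtain ⟨q, rfl⟩ : ∃ q, t = q + 1 := ⟨t - 1, by omega⟩
    have a2 : 2 * (q + 1) - 1 = 2 * q + 1 := by omega
    rw [a2] at h
    rw [Nat.add_sub_cancel] at hch
    zify at h hch
    push_cast
    nlinarith
  clear h hm htot hE
  have main : ∀ j, j ≤ k + 1 → ∃ S : Fin j → Finset V, (∀ i, (S i).card = 3) ∧
      (∀ i, IsRainbowClique G C (S i)) ∧ ∀ i j, i ≠ j → Disjoint (S i) (S j) := by
    intro j
    induction j with
    | zero => intro _; exact ⟨fun _ => ∅, fun i => i.elim0, fun i => i.elim0, fun i => i.elim0⟩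
    | succ j ih =>
      intro hj
      obtain ⟨S, hS1, hS2, hS3⟩ := ih (by omega)
      set U := Finset.univ.biUnion S with hU
      have hUc : U.card = 3 * j := by
        rw [hU, Finset.card_biUnion (fun a _ b _ hab => hS3 a b hab)]
        simp [hS1, mul_comm]
      have hTc : Uᶜ.card + 3 * j = t + 3 * k := by
        rw [← hUc, ← hV]
        exact Finset.card_compl_add_card U
      obtain ⟨p, hp⟩ : ∃ p, k = j + p := ⟨k - j, by omega⟩
      have hTc' : Uᶜ.card = t + 3 * p := by omega
      have hrem := tot_remove G C Uᶜ (3 * j) Finset.univ (Finset.subset_univ _)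
        (by rw [Finset.card_univ, hV, hTc])
      rw [Finset.card_univ, hV, hTc'] at hrem
      have hnot : ¬ (∀ a ∈ Uᶜ, ∀ b ∈ Uᶜ, ∀ c ∈ Uᶜ, G.Adj a b → G.Adj a c → G.Adj b c →
          C s(a, b) ≠ C s(a, c) → C s(a, b) ≠ C s(b, c) → C s(a, c) ≠ C s(b, c) → False) := by
        intro hno
        have hb := tot_bound G C (t + 3 * p - 1) Uᶜ (by omega) hno
        have e1 : t + 3 * p - 1 + 1 = t + 3 * p := by omega
        have e2 : t + 3 * p - 1 + 2 = t + 3 * p + 1 := by omega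
        rw [e1, e2] at hb
        zify at hb ht
        push_cast at hrem
        have hp0 : (0 : ℤ) ≤ p := by positivity
        nlinarith [mul_nonneg hp0 (sub_nonneg.2 ht), mul_nonneg hp0 hp0]
      push Not at hnot
      obtain ⟨a, ha, b, hb, c, hc, h1, h2, h3, h4, h5, h6, -⟩ := hnot
      have hd : ∀ i, Disjoint {a, b, c} (S i) := by
        intro i
        have hsub : S i ⊆ U := Finset.subset_biUnion_of_mem S (Finset.mem_univ i)
        rw [Finset.disjoint_left]
        intro x hx hxi
        have hxU := hsub hxi
        simp only [Finset.mem_insert, Finset.mem_singleton] at hx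
        rcases hx with rfl | rfl | rfl
        · exact Finset.mem_compl.1 ha hxU
        · exact Finset.mem_compl.1 hb hxU
        · exact Finset.mem_compl.1 hc hxU
      refine ⟨Fin.cons {a, b, c} S, ?_, ?_, ?_⟩
      · intro i
        refine Fin.cases ?_ (fun i => ?_) i
        · exact Finset.card_eq_three.2 ⟨a, b, c, h1.ne, h2.ne, h3.ne, rfl⟩
        · exact hS1 i
      · intro i
        refine Fin.cases ?_ (fun i => ?_) i
        · exact rainbow_of G C a b c h1 h2 h3 h4 h5 h6
        · exact hS2 i
      · intro i i'
        refine Fin.cases ?_ (fun i => ?_) i <;> refine Fin.cases ?_ (fun i' => ?_) i'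
        · intro h; exact absurd rfl h
        · intro _; exact hd i'
        · intro _; exact (hd i).symm
        · intro h; exact hS3 i i' (fun hh => h (by rw [hh]))
  exact main (k + 1) le_rfl
end

section
/- Let m ≥ 1 and let G be a completely edge-colored complete graph on n ≥ 9m + 8 vertices. If the number of distinct colors satisfies c(G) > mn - ((m+1) choose 2), then G contains m pairwise vertex-disjoint rainbow triangles. -/
open Classical in
/-- colors spanned by a vertex set -/
noncomputable def rtCols {V : Type*} (C : Sym2 V → ℕ) (A : Finset V) : Finset ℕ :=
  A.offDiag.image (fun p => C s(p.1, p.2))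

/-- colors from a vertex to a set -/
noncomputable def rtStar {V : Type*} (C : Sym2 V → ℕ) (v : V) (B : Finset V) : Finset ℕ :=
  B.image (fun a => C s(v, a))

/-- three vertices forming a rainbow triangle -/
def RtTri {V : Type*} (C : Sym2 V → ℕ) (x y z : V) : Prop :=
  x ≠ y ∧ x ≠ z ∧ y ≠ z ∧ C s(x, y) ≠ C s(x, z) ∧ C s(x, y) ≠ C s(y, z) ∧ C s(x, z) ≠ C s(y, z)

lemma rt_mem_cols {V : Type*} (C : Sym2 V → ℕ) (A : Finset V) (c : ℕ) :
    c ∈ rtCols C A ↔ ∃ a ∈ A, ∃ b ∈ A, a ≠ b ∧ C s(a, b) = c := by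
  classical
  simp only [rtCols, Finset.mem_image, Finset.mem_offDiag, Prod.exists]
  constructor
  · rintro ⟨a, b, ⟨h1, h2, h3⟩, h⟩
    exact ⟨a, h1, b, h2, h3, h⟩
  · rintro ⟨a, h1, b, h2, h3, h⟩
    exact ⟨a, b, ⟨h1, h2, h3⟩, h⟩

lemma rt_mem_star {V : Type*} (C : Sym2 V → ℕ) (v : V) (B : Finset V) (c : ℕ) :
    c ∈ rtStar C v B ↔ ∃ a ∈ B, C s(v, a) = c := by
  simp [rtStar]

lemma rt_key {V : Type*} [DecidableEq V] (C : Sym2 V → ℕ) (v : V) (B W : Finset V) (hv : v ∉ B)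
    (h : W.card + 2 ≤ (rtStar C v B \ rtCols C B).card) :
    ∃ a ∈ B, ∃ b ∈ B, a ∉ W ∧ b ∉ W ∧ RtTri C v a b := by
  have h1 : (rtStar C v W).card ≤ W.card := Finset.card_image_le
  have h2 : 1 < ((rtStar C v B \ rtCols C B) \ rtStar C v W).card := by
    have := Finset.le_card_sdiff (rtStar C v W) (rtStar C v B \ rtCols C B)
    omega
  obtain ⟨p, hp, q, hq, hpq⟩ := Finset.one_lt_card.1 h2
  simp only [Finset.mem_sdiff, rt_mem_star] at hp hq
  obtain ⟨⟨⟨a, ha, rfl⟩, hpc⟩, hpW⟩ := hp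
  obtain ⟨⟨⟨b, hb, rfl⟩, hqc⟩, hqW⟩ := hq
  have hab : a ≠ b := fun h => hpq (by rw [h])
  have hc : C s(a, b) ∈ rtCols C B := (rt_mem_cols C B _).2 ⟨a, ha, b, hb, hab, rfl⟩
  refine ⟨a, ha, b, hb, fun h => hpW ⟨a, h, rfl⟩, fun h => hqW ⟨b, h, rfl⟩, ?_, ?_, hab, hpq, ?_, ?_⟩
  · rintro rfl; exact hv ha
  · rintro rfl; exact hv hb
  · intro h; rw [h] at hpc; exact hpc hc
  · intro h; rw [h] at hqc; exact hqc hc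

lemma rt_cols_insert {V : Type*} [DecidableEq V] (C : Sym2 V → ℕ) (v : V) (B : Finset V) :
    rtCols C (insert v B) ⊆ rtCols C B ∪ (rtStar C v B \ rtCols C B) := by
  intro c hc
  rw [Finset.union_sdiff_self_eq_union, Finset.mem_union, rt_mem_star]
  rw [rt_mem_cols] at hc ⊢
  obtain ⟨a, ha, b, hb, hab, rfl⟩ := hc
  rcases Finset.mem_insert.1 ha with rfl | ha2
  · rcases Finset.mem_insert.1 hb with rfl | hb
    · exact absurd rfl hab
    · exact Or.inr ⟨b, hb, rfl⟩
  · rcases Finset.mem_insert.1 hb with rfl | hb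
    · exact Or.inr ⟨a, ha2, by rw [Sym2.eq_swap]⟩
    · exact Or.inl ⟨a, ha2, b, hb, hab, rfl⟩

lemma rt_card_insert {V : Type*} [DecidableEq V] (C : Sym2 V → ℕ) (v : V) (B : Finset V) :
    (rtCols C (insert v B)).card ≤ (rtCols C B).card + (rtStar C v B \ rtCols C B).card :=
  (Finset.card_le_card (rt_cols_insert C v B)).trans (Finset.card_union_le _ _)

lemma rt_gallai {V : Type*} [DecidableEq V] (C : Sym2 V → ℕ) (A : Finset V) (hA : A.Nonempty)
    (h : A.card ≤ (rtCols C A).card) : ∃ x ∈ A, ∃ y ∈ A, ∃ z ∈ A, RtTri C x y z := by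
  induction hA using Finset.Nonempty.cons_induction with
  | singleton a => simp [rtCols] at h
  | cons a s ha hs ih =>
    rw [Finset.cons_eq_insert] at *
    rw [Finset.card_insert_of_notMem ha] at h
    by_cases h1 : s.card ≤ (rtCols C s).card
    · obtain ⟨x, hx, y, hy, z, hz, ht⟩ := ih h1
      exact ⟨x, by simp [hx], y, by simp [hy], z, by simp [hz], ht⟩
    · have := rt_card_insert C a s
      obtain ⟨x, hx, y, hy, -, -, ht⟩ := rt_key C a s ∅ ha (by simp; omega)
      exact ⟨a, by simp, x, by simp [hx], y, by simp [hy], ht⟩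

lemma rt_three {V : Type*} [DecidableEq V] (C : Sym2 V → ℕ) (A : Finset V) (x y z : V) :
    (rtCols C A).card ≤ (rtCols C (A \ {x, y, z})).card
      + (rtStar C x (A \ {x, y, z}) \ rtCols C (A \ {x, y, z})).card
      + (rtStar C y (A \ {x, y, z}) \ rtCols C (A \ {x, y, z})).card
      + (rtStar C z (A \ {x, y, z}) \ rtCols C (A \ {x, y, z})).card + 3 := by
  set B := A \ {x, y, z} with hB
  have hsub : rtCols C A ⊆ (((rtCols C B ∪ (rtStar C x B \ rtCols C B)) ∪
      (rtStar C y B \ rtCols C B)) ∪ (rtStar C z B \ rtCols C B)) ∪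
      {C s(x, y), C s(x, z), C s(y, z)} := by
    intro c hc
    obtain ⟨a, ha, b, hb, hab, hc⟩ := (rt_mem_cols C A c).1 hc
    simp only [Finset.mem_union, Finset.mem_sdiff, Finset.mem_insert, Finset.mem_singleton]
    by_cases hcB : c ∈ rtCols C B
    · simp [hcB]
    simp only [hcB, rt_mem_star, not_false_eq_true, and_true, false_or]
    have haB : a ∈ B ∨ a = x ∨ a = y ∨ a = z := by
      by_cases h : a = x ∨ a = y ∨ a = z
      · exact Or.inr h
      · left; simp [hB, ha]; tauto
    have hbB : b ∈ B ∨ b = x ∨ b = y ∨ b = z := by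
      by_cases h : b = x ∨ b = y ∨ b = z
      · exact Or.inr h
      · left; simp [hB, hb]; tauto
    have hc' : C s(b, a) = c := by rw [Sym2.eq_swap]; exact hc
    rcases haB with haB | haB
    · rcases hbB with hbB | hbB
      · exact absurd ((rt_mem_cols C B c).2 ⟨a, haB, b, hbB, hab, hc⟩) hcB
      · left
        rcases hbB with rfl | rfl | rfl
        · exact Or.inl (Or.inl ⟨a, haB, hc'⟩)
        · exact Or.inl (Or.inr ⟨a, haB, hc'⟩)
        · exact Or.inr ⟨a, haB, hc'⟩
    · rcases hbB with hbB | hbB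
      · left
        rcases haB with rfl | rfl | rfl
        · exact Or.inl (Or.inl ⟨b, hbB, hc⟩)
        · exact Or.inl (Or.inr ⟨b, hbB, hc⟩)
        · exact Or.inr ⟨b, hbB, hc⟩
      · right
        rcases haB with rfl | rfl | rfl <;> rcases hbB with rfl | rfl | rfl <;>
          first
          | exact absurd rfl hab
          | simp [hc]
          | simp [hc']
  have h1 := Finset.card_le_card hsub
  have h2 : ({C s(x, y), C s(x, z), C s(y, z)} : Finset ℕ).card ≤ 3 := Finset.card_le_three
  refine h1.trans ((Finset.card_union_le _ _).trans (Nat.add_le_add ?_ h2))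
  refine (Finset.card_union_le _ _).trans (Nat.add_le_add ?_ le_rfl)
  refine (Finset.card_union_le _ _).trans (Nat.add_le_add ?_ le_rfl)
  exact Finset.card_union_le _ _

lemma rt_clique {V : Type*} [DecidableEq V] (C : Sym2 V → ℕ) (x y z : V) (h : RtTri C x y z) :
    ({x, y, z} : Finset V).card = 3 ∧ IsRainbowClique (⊤ : SimpleGraph V) C {x, y, z} := by
  obtain ⟨h1, h2, h3, h4, h5, h6⟩ := h
  refine ⟨Finset.card_eq_three.2 ⟨x, y, z, h1, h2, h3, rfl⟩, fun u _ v _ h => h, ?_⟩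
  have e1 : s(y, x) = s(x, y) := Sym2.eq_swap
  have e2 : s(z, x) = s(x, z) := Sym2.eq_swap
  have e3 : s(z, y) = s(y, z) := Sym2.eq_swap
  intro u hu v hv p hp q hq huv hpq hc
  have key : ∀ u ∈ ({x, y, z} : Finset V), ∀ v ∈ ({x, y, z} : Finset V), u ≠ v →
      s(u, v) = s(x, y) ∨ s(u, v) = s(x, z) ∨ s(u, v) = s(y, z) := by
    intro u hu v hv huv
    simp only [Finset.mem_insert, Finset.mem_singleton] at hu hv
    rcases hu with rfl | rfl | rfl <;> rcases hv with rfl | rfl | rfl <;> simp_all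
  rcases key u hu v hv huv with e | e | e <;> rcases key p hp q hq hpq with e' | e' | e' <;>
    rw [e, e'] at hc ⊢ <;> first | exact absurd hc ‹_› | exact absurd hc.symm ‹_›

/-- packing statement inside a vertex set -/
def RtPack {V : Type*} (C : Sym2 V → ℕ) (m : ℕ) (A : Finset V) : Prop :=
  ∃ S : Fin m → Finset V, (∀ i, S i ⊆ A) ∧ (∀ i, (S i).card = 3) ∧
      (∀ i, IsRainbowClique (⊤ : SimpleGraph V) C (S i)) ∧
      ∀ i j, i ≠ j → Disjoint (S i) (S j)

lemma rt_cons {V : Type*} [DecidableEq V] (C : Sym2 V → ℕ) (k : ℕ) (A : Finset V)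
    (S : Fin k → Finset V) (hS : ∀ i, S i ⊆ A) (h3 : ∀ i, (S i).card = 3)
    (hr : ∀ i, IsRainbowClique (⊤ : SimpleGraph V) C (S i))
    (hd : ∀ i j, i ≠ j → Disjoint (S i) (S j))
    (x y z : V) (hx : x ∈ A) (hy : y ∈ A) (hz : z ∈ A) (ht : RtTri C x y z)
    (hx' : ∀ i, x ∉ S i) (hy' : ∀ i, y ∉ S i) (hz' : ∀ i, z ∉ S i) : RtPack C (k + 1) A := by
  obtain ⟨c3, cr⟩ := rt_clique C x y z ht
  have hdis : ∀ i, Disjoint ({x, y, z} : Finset V) (S i) := by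
    intro i
    simp [Finset.disjoint_insert_left, hx' i, hy' i, hz' i]
  refine ⟨Fin.cons {x, y, z} S, ?_, ?_, ?_, ?_⟩
  · intro i
    refine Fin.cases ?_ (fun i => ?_) i
    · simp [Finset.insert_subset_iff, hx, hy, hz]
    · simpa using hS i
  · intro i
    refine Fin.cases ?_ (fun i => ?_) i
    · simpa using c3
    · simpa using h3 i
  · intro i
    refine Fin.cases ?_ (fun i => ?_) i
    · simpa using cr
    · simpa using hr i
  · intro i j
    refine Fin.cases ?_ (fun i => ?_) i <;> refine Fin.cases ?_ (fun j => ?_) j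
    · intro h; exact absurd rfl h
    · intro _; simpa only [Fin.cons_zero, Fin.cons_succ] using hdis j
    · intro _; simpa only [Fin.cons_zero, Fin.cons_succ] using (hdis i).symm
    · intro h
      simpa only [Fin.cons_succ] using hd i j (fun e => h (by rw [e]))

lemma rt_main {V : Type*} [DecidableEq V] (C : Sym2 V → ℕ) (m : ℕ) : ∀ A : Finset V,
    9 * m + 8 ≤ A.card → m * A.card < (rtCols C A).card + (m + 1).choose 2 → RtPack C m A := by
  induction m with
  | zero => intro A _ _; exact ⟨fun i => i.elim0, fun i => i.elim0, fun i => i.elim0,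
      fun i => i.elim0, fun i => i.elim0⟩
  | succ k ih =>
    intro A hA h
    have hch : (k + 1 + 1).choose 2 = (k + 1) + (k + 1).choose 2 := by
      rw [Nat.choose_succ_succ' (k + 1) 1, Nat.choose_one_right]
    rw [hch, Nat.add_mul, one_mul] at h
    -- the vertex step
    have vstep : ∀ x ∈ A, ∀ B ⊆ A, x ∉ B → 3 * k + 2 ≤ (rtStar C x B \ rtCols C B).card →
        RtPack C (k + 1) A := by
      intro x hx B hBA hxB hlarge
      have hcard : (A.erase x).card + 1 = A.card := Finset.card_erase_add_one hx
      have h1 := rt_card_insert C x (A.erase x)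
      rw [Finset.insert_erase hx] at h1
      have h2 : (rtStar C x (A.erase x) \ rtCols C (A.erase x)).card ≤ (A.erase x).card :=
        (Finset.card_le_card Finset.sdiff_subset).trans Finset.card_image_le
      obtain ⟨S, hS, h3, hr, hd⟩ := ih (A.erase x) (by omega) (by
        rw [← hcard, Nat.mul_add] at h
        omega)
      have hW : (Finset.univ.biUnion S).card ≤ 3 * k := by
        refine Finset.card_biUnion_le.trans ?_
        simp [h3, mul_comm]
      obtain ⟨a, ha, b, hb, haW, hbW, ht⟩ := rt_key C x B (Finset.univ.biUnion S) hxB (by omega)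
      simp only [Finset.mem_biUnion, Finset.mem_univ, true_and, not_exists] at haW hbW
      exact rt_cons C k A S (fun i => (hS i).trans (Finset.erase_subset _ _)) h3 hr hd x a b hx
        (hBA ha) (hBA hb) ht (fun i hi => by simpa using hS i hi) haW hbW
    have hgal : A.card ≤ (rtCols C A).card := by
      have h1 : (k + 1).choose 2 ≤ k * (k + 1) := by
        rw [Nat.choose_two_right, Nat.add_sub_cancel, mul_comm]
        exact Nat.div_le_self _ _
      have h2 : k * (k + 2) ≤ k * A.card := Nat.mul_le_mul_left k (by omega)
      rw [Nat.mul_add] at h1 h2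
      omega
    obtain ⟨x, hx, y, hy, z, hz, ht⟩ := rt_gallai C A (Finset.card_pos.1 (by omega)) hgal
    have h3 := rt_three C A x y z
    by_cases dx : 3 * k + 2 ≤ (rtStar C x (A \ {x, y, z}) \ rtCols C (A \ {x, y, z})).card
    · exact vstep x hx _ Finset.sdiff_subset (by simp) dx
    by_cases dy : 3 * k + 2 ≤ (rtStar C y (A \ {x, y, z}) \ rtCols C (A \ {x, y, z})).card
    · exact vstep y hy _ Finset.sdiff_subset (by simp) dy
    by_cases dz : 3 * k + 2 ≤ (rtStar C z (A \ {x, y, z}) \ rtCols C (A \ {x, y, z})).card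
    · exact vstep z hz _ Finset.sdiff_subset (by simp) dz
    have hcard : (A \ {x, y, z}).card + 3 = A.card := by
      have hs : ({x, y, z} : Finset V) ⊆ A := by simp [Finset.insert_subset_iff, hx, hy, hz]
      have := Finset.card_sdiff_add_card_eq_card hs
      rwa [(rt_clique C x y z ht).1] at this
    obtain ⟨S, hS, hS3, hr, hd⟩ := ih (A \ {x, y, z}) (by omega) (by
      rw [← hcard, Nat.mul_add] at h
      omega)
    exact rt_cons C k A S (fun i => (hS i).trans Finset.sdiff_subset) hS3 hr hd x y z hx hy hz ht
      (fun i hi => by simpa using hS i hi) (fun i hi => by simpa using hS i hi)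
      (fun i hi => by simpa using hS i hi)

/-- If `G` is an edge-colored complete graph on `n ≥ 9m + 8` vertices with
`c(G) > mn - C(m+1, 2)` colors, then `G` contains `m` pairwise vertex-disjoint
rainbow triangles. -/
theorem disjoint_rainbow_triangles_of_colors_in_complete {V : Type*} [Fintype V] (n m : ℕ)
    (hm : 1 ≤ m) (hV : Fintype.card V = n) (hn : 9 * m + 8 ≤ n)
    (C : Sym2 V → ℕ)
    (h : Nat.card (C '' (⊤ : SimpleGraph V).edgeSet) > m * n - (m + 1).choose 2) :
    ∃ S : Fin m → Finset V, (∀ i, (S i).card = 3) ∧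
      (∀ i, IsRainbowClique (⊤ : SimpleGraph V) C (S i)) ∧
      ∀ i j, i ≠ j → Disjoint (S i) (S j) := by
  classical
  have he : C '' (⊤ : SimpleGraph V).edgeSet = ↑(rtCols C Finset.univ) := by
    ext c
    rw [Finset.mem_coe, rt_mem_cols]
    constructor
    · rintro ⟨e, he, rfl⟩
      induction e with
      | _ a b => exact ⟨a, Finset.mem_univ _, b, Finset.mem_univ _, by simpa using he, rfl⟩
    · rintro ⟨a, -, b, -, hab, rfl⟩
      exact ⟨s(a, b), by simpa using hab, rfl⟩
  rw [he, Nat.card_coe_set_eq, Set.ncard_coe_finset] at h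
  obtain ⟨S, -, h1, h2, h3⟩ := rt_main C m Finset.univ (by rw [Finset.card_univ]; omega)
    (by rw [Finset.card_univ, hV]; omega)
  exact ⟨S, h1, h2, h3⟩
end

section
/- Let G be an edge-colored graph, let v_1, ..., v_N be N ≥ 1 distinct vertices of G, and let k ≥ 0. If φ_G(v_1, ..., v_N) ≥ k + N - 1, then there exist k edges e_1, ..., e_k of G such that: (1) for every i ≤ k, the edge e_i is incident to v_1 and its other endpoint lies outside {v_1, ..., v_N}; (2) the colors C(e_1), ..., C(e_k) are pairwise distinct; and (3) each color C(e_i) is saturated by some set {v_1, ..., v_M} with M ≤ N. -/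
/-- A color `R` appears on some edge of the edge-colored graph `(G, C)`. -/
def IsColor {V : Type*} (G : SimpleGraph V) (C : Sym2 V → ℕ) (R : ℕ) : Prop :=
  ∃ e ∈ G.edgeSet, C e = R

/-- A color `R` is saturated by a vertex set `A` if every edge of `G` colored `R`
has an endpoint in `A`. -/
def Saturated {V : Type*} (G : SimpleGraph V) (C : Sym2 V → ℕ) (A : Set V) (R : ℕ) : Prop :=
  ∀ e ∈ G.edgeSet, C e = R → ∃ v ∈ A, v ∈ e

/-- A color `R` is ideally saturated by `A` if it is saturated by `A` but not by any
proper subset of `A`. -/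
def IdeallySaturated {V : Type*} (G : SimpleGraph V) (C : Sym2 V → ℕ) (A : Set V) (R : ℕ) :
    Prop :=
  Saturated G C A R ∧ ∀ B : Set V, B ⊂ A → ¬ Saturated G C B R

/-- `φ_G(A)`: the number of colors of `G` ideally saturated by `A`. -/
noncomputable def phiSat {V : Type*} (G : SimpleGraph V) (C : Sym2 V → ℕ) (A : Set V) : ℕ :=
  Nat.card {R : ℕ | IsColor G C R ∧ IdeallySaturated G C A R}

/-- If `φ_G(v_1, ..., v_N) := Σ_{i=1}^N φ_G({v_1, ..., v_i}) ≥ k + N - 1` for distinct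
vertices `v_1, ..., v_N`, then there are `k` edges at `v_1` with pairwise distinct colors,
whose other endpoints avoid `{v_1, ..., v_N}`, each of whose colors is saturated by some
initial segment `{v_1, ..., v_M}` with `M ≤ N`. -/
theorem exists_edges_of_phiSat_sum {V : Type*} [Fintype V]
    (G : SimpleGraph V) (C : Sym2 V → ℕ) (N k : ℕ) (hN : 0 < N)
    (v : Fin N → V) (hv : Function.Injective v)
    (h : ∑ i : Fin N, phiSat G C {x | ∃ j, j ≤ i ∧ x = v j} ≥ k + N - 1) :
    ∃ w : Fin k → V,
      (∀ i, G.Adj (v ⟨0, hN⟩) (w i)) ∧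
      (∀ i, w i ∉ Set.range v) ∧
      (∀ i j, i ≠ j → C s(v ⟨0, hN⟩, w i) ≠ C s(v ⟨0, hN⟩, w j)) ∧
      (∀ i, ∃ M : Fin N, Saturated G C {x | ∃ j, j ≤ M ∧ x = v j} (C s(v ⟨0, hN⟩, w i))) := by
  classical
  set A : Fin N → Set V := fun i => {x | ∃ j, j ≤ i ∧ x = v j} with hA
  set z : Fin N := ⟨0, hN⟩ with hz
  have hz0 : ∀ i : Fin N, z ≤ i := fun i => Nat.zero_le _
  have hfin : ∀ i, {R : ℕ | IsColor G C R ∧ IdeallySaturated G C (A i) R}.Finite := by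
    intro i
    refine (Set.toFinite (C '' G.edgeSet)).subset ?_
    rintro R ⟨⟨e, he, hR⟩, -⟩
    exact ⟨e, he, hR⟩
  have hcard : ∀ i, phiSat G C (A i) = (hfin i).toFinset.card := by
    intro i
    unfold phiSat
    rw [Nat.card_coe_set_eq, Set.ncard_eq_toFinset_card _ (hfin i)]
  have hlt : ∀ i j, i < j → A i ⊂ A j := by
    intro i j hij
    refine ⟨?_, ?_⟩
    · rintro x ⟨l, hl, rfl⟩
      exact ⟨l, hl.trans hij.le, rfl⟩
    · intro hsub
      obtain ⟨l, hl, hl2⟩ := hsub ⟨j, le_refl j, rfl⟩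
      have := hv hl2
      subst this
      exact absurd hl (not_le.mpr hij)
  have hdisj : ((Finset.univ : Finset (Fin N)) : Set (Fin N)).PairwiseDisjoint
      (fun i => (hfin i).toFinset) := by
    intro i _ j _ hij
    refine Finset.disjoint_left.mpr ?_
    intro R h1 h2
    simp only [Set.Finite.mem_toFinset, Set.mem_setOf_eq] at h1 h2
    rcases lt_or_gt_of_ne hij with hh | hh
    · exact h2.2.2 _ (hlt _ _ hh) h1.2.1
    · exact h1.2.2 _ (hlt _ _ hh) h2.2.1
  set T := (Finset.univ : Finset (Fin N)).biUnion (fun i => (hfin i).toFinset) with hT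
  have hTcard : k + N - 1 ≤ T.card := by
    rw [hT, Finset.card_biUnion hdisj]
    refine le_trans h (le_of_eq (Finset.sum_congr rfl fun i _ => hcard i))
  set B := ((Finset.univ : Finset (Fin N)).erase z).image (fun j => C s(v z, v j)) with hB
  have hBcard : B.card ≤ N - 1 := by
    refine Finset.card_image_le.trans ?_
    simp
  have hk : k ≤ (T \ B).card := by
    have := Finset.le_card_sdiff B T
    omega
  have key : ∀ R ∈ T \ B, ∃ w, G.Adj (v z) w ∧ w ∉ Set.range v ∧ C s(v z, w) = R ∧
      ∃ M : Fin N, Saturated G C (A M) R := by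
    intro R hR
    rw [Finset.mem_sdiff] at hR
    obtain ⟨hRT, hRB⟩ := hR
    rw [hT, Finset.mem_biUnion] at hRT
    obtain ⟨i, -, hi⟩ := hRT
    simp only [Set.Finite.mem_toFinset, Set.mem_setOf_eq] at hi
    obtain ⟨-, hs, hns⟩ := hi
    have hzA : v z ∈ A i := ⟨z, hz0 i, rfl⟩
    have h1 := hns (A i \ {v z}) ⟨Set.diff_subset, fun hh => (hh hzA).2 rfl⟩
    unfold Saturated at h1
    push Not at h1
    obtain ⟨e, he, heR, hee⟩ := h1
    obtain ⟨x, hxA, hxe⟩ := hs e he heR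
    have hx : x = v z := by
      by_contra hne
      exact hee x ⟨hxA, hne⟩ hxe
    subst hx
    obtain ⟨w, rfl⟩ := Sym2.mem_iff_exists.mp hxe
    have hadj : G.Adj (v z) w := he
    refine ⟨w, hadj, ?_, heR, i, hs⟩
    rintro ⟨j, rfl⟩
    refine hRB (Finset.mem_image.mpr ⟨j, Finset.mem_erase.mpr ⟨?_, Finset.mem_univ _⟩, heR⟩)
    rintro rfl
    exact hadj.ne rfl
  obtain ⟨S, hST, hS⟩ := Finset.exists_subset_card_eq hk
  let f := S.equivFinOfCardEq hS
  choose w hw1 hw2 hw3 hw4 using key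
  refine ⟨fun i => w (f.symm i) (hST (f.symm i).2), fun i => hw1 _ _, fun i => hw2 _ _, ?_, ?_⟩
  · intro i j hij
    dsimp only
    rw [hw3, hw3]
    intro hh
    exact hij (f.symm.injective (Subtype.ext hh))
  · intro i
    dsimp only
    rw [hw3]
    exact hw4 _ (hST (f.symm i).2)
end

section
/- For every n ≥ 2, the edge coloring of the complete graph on vertices v_1, ..., v_n defined by C(v_i v_j) = i for 1 ≤ i < j ≤ n uses exactly n - 1 colors and contains no rainbow triangle; consequently for this edge-colored graph T_n one has e(T_n) + c(T_n) = (n choose 2) + n - 1. -/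
/-- The edge-colored complete graph `T_n` (edge `v_i v_j` gets color `min i j`) uses exactly
`n - 1` colors, has no rainbow triangle, and satisfies `e(T_n) + c(T_n) = C(n,2) + n - 1`. -/
theorem Tn_colors_and_no_rainbow_triangle (n : ℕ) (hn : 2 ≤ n)
    (C : Sym2 (Fin n) → ℕ) (hC : ∀ i j : Fin n, i ≠ j → C s(i, j) = min i.val j.val) :
    Nat.card (C '' (⊤ : SimpleGraph (Fin n)).edgeSet) = n - 1 ∧
    (¬ ∃ a b c : Fin n, a ≠ b ∧ a ≠ c ∧ b ≠ c ∧
      C s(a, b) ≠ C s(a, c) ∧ C s(a, b) ≠ C s(b, c) ∧ C s(a, c) ≠ C s(b, c)) ∧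
    Nat.card (⊤ : SimpleGraph (Fin n)).edgeSet
      + Nat.card (C '' (⊤ : SimpleGraph (Fin n)).edgeSet) = n.choose 2 + (n - 1) := by
  have himg : C '' (⊤ : SimpleGraph (Fin n)).edgeSet = ((Finset.range (n - 1) : Finset ℕ) : Set ℕ) := by
    ext k
    simp only [Set.mem_image, Finset.coe_range, Set.mem_Iio]
    constructor
    · rintro ⟨e, he, rfl⟩
      induction e using Sym2.ind with
      | _ i j =>
        have hij : i ≠ j := by simpa using he
        rw [hC i j hij]
        have h : i.val ≠ j.val := fun h => hij (Fin.ext h)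
        have := i.isLt
        have := j.isLt
        omega
    · intro hk
      have hne : (⟨k, by omega⟩ : Fin n) ≠ ⟨n - 1, by omega⟩ := by
        intro h
        have := congrArg Fin.val h
        simp only at this
        omega
      refine ⟨s(⟨k, by omega⟩, ⟨n - 1, by omega⟩), by simpa using hne, ?_⟩
      rw [hC _ _ hne]
      simp only
      omega
  have hcard : Nat.card (C '' (⊤ : SimpleGraph (Fin n)).edgeSet) = n - 1 := by
    rw [himg, Nat.card_coe_set_eq, Set.ncard_coe_finset, Finset.card_range]
  refine ⟨hcard, ?_, ?_⟩
  · rintro ⟨a, b, c, hab, hac, hbc, h1, h2, h3⟩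
    rw [hC a b hab, hC a c hac] at h1
    rw [hC a b hab, hC b c hbc] at h2
    rw [hC a c hac, hC b c hbc] at h3
    omega
  · rw [hcard, Nat.card_eq_fintype_card, ← SimpleGraph.edgeFinset_card,
      SimpleGraph.card_edgeFinset_top_eq_card_choose_two, Fintype.card_fin]
end

section
/- For all m ≥ 1 and n ≥ m + 1, there exists an edge coloring of the complete graph K_n using exactly mn - ((m+1) choose 2) distinct colors that contains no m pairwise vertex-disjoint rainbow triangles. (In particular, the bound c(G) > mn - ((m+1) choose 2) in the accompanying theorem on complete graphs is best possible.) -/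
/-- The color of the edge with smaller endpoint `i` and larger endpoint `j`. -/
def myCol (m n i j : ℕ) : ℕ := n * i + (if i + 1 < m then j else 0)

/-- The coloring of the construction. -/
def myC (m n : ℕ) (e : Sym2 (Fin n)) : ℕ :=
  myCol m n (e.inf : Fin n).val (e.sup : Fin n).val

lemma myC_lt (m n : ℕ) (a b : Fin n) (h : a < b) : myC m n s(a, b) = myCol m n a b := by
  simp [myC, h.le]

/-- The index set of colors. -/
def myP (m n : ℕ) : Finset (Σ _ : ℕ, ℕ) :=
  (Finset.range (n - 1)).sigma (fun i => if i + 1 < m then Finset.Ioo i n else {0})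

lemma my_image (m n : ℕ) :
    myC m n '' (⊤ : SimpleGraph (Fin n)).edgeSet =
      ((myP m n).image (fun p => n * p.1 + p.2) : Finset ℕ) := by
  ext c
  simp only [Set.mem_image, Finset.coe_image, Finset.mem_coe]
  constructor
  · rintro ⟨e, he, rfl⟩
    induction e using Sym2.ind with
    | _ a b =>
    wlog hab : a < b generalizing a b
    · have hne : a ≠ b := by simpa using he
      have := this b a (by simpa using hne.symm) (lt_of_le_of_ne (not_lt.mp hab) hne.symm)
      rwa [Sym2.eq_swap] at this
    rw [myC_lt m n a b hab]
    have h1 : (a : ℕ) < b := hab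
    have h2 := b.2
    refine ⟨⟨a, if (a : ℕ) + 1 < m then b else 0⟩, ?_, rfl⟩
    simp only [myP, Finset.mem_sigma, Finset.mem_range]
    refine ⟨by omega, ?_⟩
    split_ifs <;> simp [h1]
  · rintro ⟨⟨i, j⟩, hp, rfl⟩
    simp only [myP, Finset.mem_sigma, Finset.mem_range] at hp
    obtain ⟨hi, hj⟩ := hp
    split_ifs at hj with h
    · rw [Finset.mem_Ioo] at hj
      have hlt : (⟨i, by omega⟩ : Fin n) < ⟨j, hj.2⟩ := hj.1
      refine ⟨s(⟨i, by omega⟩, ⟨j, hj.2⟩), by simpa using hlt.ne, ?_⟩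
      rw [myC_lt m n _ _ hlt]
      simp [myCol, h]
    · have hj0 : j = 0 := by simpa using hj
      have hlt : (⟨i, by omega⟩ : Fin n) < ⟨i + 1, by omega⟩ := Nat.lt_succ_self i
      refine ⟨s(⟨i, by omega⟩, ⟨i + 1, by omega⟩), by simpa using hlt.ne, ?_⟩
      rw [myC_lt m n _ _ hlt]
      simp [myCol, h, hj0]

lemma my_inj (m n : ℕ) : Set.InjOn (fun p : Σ _ : ℕ, ℕ => n * p.1 + p.2) (myP m n) := by
  have key : ∀ p ∈ myP m n, p.2 < n := by
    rintro ⟨i, j⟩ hp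
    simp only [myP, Finset.mem_sigma, Finset.mem_range] at hp
    obtain ⟨hi, hj⟩ := hp
    split_ifs at hj with h
    · exact (Finset.mem_Ioo.mp hj).2
    · have hj0 : j = 0 := by simpa using hj
      simp only
      omega
  rintro ⟨i, j⟩ hp ⟨i', j'⟩ hp' heq
  have h1 : j < n := key _ hp
  have h2 : j' < n := key _ hp'
  simp only at heq
  have e1 : i = i' := by
    have := congrArg (· / n) heq
    simpa [Nat.mul_add_div (by omega : n > 0), Nat.div_eq_of_lt h1, Nat.div_eq_of_lt h2] using this
  subst e1
  have e2 : j = j' := by omega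
  subst e2
  rfl

lemma my_sum (k N : ℕ) (h : k ≤ N) :
    ∑ i ∈ Finset.range k, (N - i) + k.choose 2 = k * N := by
  induction k with
  | zero => simp
  | succ k ih =>
    have := ih (by omega)
    rw [Finset.sum_range_succ, Nat.choose_succ_succ' k 1, Nat.choose_one_right, Nat.succ_mul]
    simp only [Nat.reduceAdd]
    omega

lemma my_card (m n : ℕ) (hm : 1 ≤ m) (hn : m + 1 ≤ n) :
    (myP m n).card = m * n - (m + 1).choose 2 := by
  obtain ⟨k, rfl⟩ : ∃ k, m = k + 1 := ⟨m - 1, by omega⟩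
  obtain ⟨d, rfl⟩ : ∃ d, n = k + 2 + d := ⟨n - (k + 2), by omega⟩
  rw [myP, Finset.card_sigma, show k + 2 + d - 1 = k + (d + 1) by omega, Finset.sum_range_add]
  have e1 : ∑ i ∈ Finset.range k, (if i + 1 < k + 1 then Finset.Ioo i (k + 2 + d) else {0}).card
      = ∑ i ∈ Finset.range k, ((k + 1 + d) - i) := by
    refine Finset.sum_congr rfl fun i hi => ?_
    rw [Finset.mem_range] at hi
    rw [if_pos (by omega), Nat.card_Ioo]
    omega
  have e2 : ∑ i ∈ Finset.range (d + 1),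
      (if k + i + 1 < k + 1 then Finset.Ioo (k + i) (k + 2 + d) else {0}).card = d + 1 := by
    rw [Finset.sum_congr rfl (g := fun _ => 1)]
    · simp
    · intro i _
      rw [if_neg (by omega)]
      simp
  rw [e1, e2]
  have h := my_sum k (k + 1 + d) (by omega)
  have hc : (k + 1 + 1).choose 2 = k.choose 2 + 2 * k + 1 := by
    rw [Nat.choose_succ_succ' (k + 1) 1, Nat.choose_succ_succ' k 1]
    simp only [Nat.choose_one_right, Nat.reduceAdd]
    omega
  have hmul : (k + 1) * (k + 2 + d) = k * (k + 1 + d) + 2 * k + 2 + d := by ring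
  rw [hc, hmul]
  omega

lemma my_tri (m n : ℕ) (S : Finset (Fin n)) (hS : S.card = 3)
    (hR : IsRainbowClique (⊤ : SimpleGraph (Fin n)) (myC m n) S) :
    ∃ v ∈ S, (v : ℕ) + 1 < m := by
  by_contra! hno
  have hne : S.Nonempty := Finset.card_pos.mp (by omega)
  have ha := S.min'_mem hne
  set a := S.min' hne with had
  obtain ⟨b, c, hbc, hE⟩ := Finset.card_eq_two.mp
    (show (S.erase a).card = 2 by rw [Finset.card_erase_of_mem ha, hS])
  have hb : b ∈ S.erase a := by simp [hE]
  have hc : c ∈ S.erase a := by simp [hE]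
  have hb' := Finset.mem_erase.mp hb
  have hc' := Finset.mem_erase.mp hc
  have hab : a < b := lt_of_le_of_ne (S.min'_le b hb'.2) hb'.1.symm
  have hac : a < c := lt_of_le_of_ne (S.min'_le c hc'.2) hc'.1.symm
  have h := hR.2 a ha b hb'.2 a ha c hc'.2 hab.ne hac.ne (by
    rw [myC_lt _ _ _ _ hab, myC_lt _ _ _ _ hac]
    have := hno a ha
    simp [myCol, not_lt.mpr this])
  exact hbc (Sym2.congr_right.mp h)

/-- For all `m ≥ 1` and `n ≥ m + 1` there is an edge coloring of `K_n` with exactly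
`mn - C(m+1, 2)` colors and no `m` pairwise vertex-disjoint rainbow triangles. -/
theorem exists_coloring_no_disjoint_rainbow_triangles (m n : ℕ) (hm : 1 ≤ m)
    (hn : m + 1 ≤ n) :
    ∃ C : Sym2 (Fin n) → ℕ,
      Nat.card (C '' (⊤ : SimpleGraph (Fin n)).edgeSet) = m * n - (m + 1).choose 2 ∧
      ¬ ∃ S : Fin m → Finset (Fin n), (∀ i, (S i).card = 3) ∧
          (∀ i, IsRainbowClique (⊤ : SimpleGraph (Fin n)) C (S i)) ∧
          ∀ i j, i ≠ j → Disjoint (S i) (S j) := by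
  refine ⟨myC m n, ?_, ?_⟩
  · rw [Nat.card_coe_set_eq, my_image, Set.ncard_coe_finset,
      Finset.card_image_of_injOn (my_inj m n), my_card m n hm hn]
  · rintro ⟨S, hS, hR, hD⟩
    choose v hv hlt using fun i => my_tri m n (S i) (hS i) (hR i)
    have hinj : Function.Injective
        (fun i : Fin m => (⟨(v i : ℕ), by have := hlt i; omega⟩ : Fin (m - 1))) := by
      intro i j hij
      by_contra hne
      have hvv : v i = v j := Fin.ext (by simpa using hij)
      exact Finset.disjoint_left.mp (hD i j hne) (hv i) (hvv ▸ hv j)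
    have := Fintype.card_le_of_injective _ hinj
    simp at this
    omega
end

section
/- For all m ≥ 2 and n ≥ 5m, there exists an edge coloring of the complete graph K_n with no m pairwise vertex-disjoint rainbow triangles such that e(G) + c(G) > ((n+1) choose 2) + 6m - 6. (This disproves the conjecture of L. Li and X. Li that every edge-colored graph on n ≥ 5m vertices with e(G) + c(G) ≥ ((n+1) choose 2) + 6m - 6 contains a proper mK_3.) -/
/-- For all `m ≥ 2` and `n ≥ 5m` there is an edge coloring of `K_n` with no `m` pairwise
vertex-disjoint rainbow triangles and `e(G) + c(G) > C(n+1, 2) + 6m - 6`, disproving the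
conjecture of L. Li and X. Li. -/
theorem exists_coloring_disproving_conjecture (m n : ℕ) (hm : 2 ≤ m) (hn : 5 * m ≤ n) :
    ∃ C : Sym2 (Fin n) → ℕ,
      (¬ ∃ S : Fin m → Finset (Fin n), (∀ i, (S i).card = 3) ∧
          (∀ i, IsRainbowClique (⊤ : SimpleGraph (Fin n)) C (S i)) ∧
          ∀ i j, i ≠ j → Disjoint (S i) (S j)) ∧
      Nat.card (⊤ : SimpleGraph (Fin n)).edgeSet
          + Nat.card (C '' (⊤ : SimpleGraph (Fin n)).edgeSet)
        > (n + 1).choose 2 + 6 * m - 6 := by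
  obtain ⟨k, rfl⟩ : ∃ k, m = k + 1 := ⟨m - 1, by omega⟩
  let C : Sym2 (Fin n) → ℕ := fun e =>
    if (e.inf : Fin n).val < k then Nat.pair (e.inf : Fin n).val (e.sup : Fin n).val
    else Nat.pair (e.inf : Fin n).val (e.inf : Fin n).val
  have hC : ∀ a b : Fin n, a < b →
      C s(a, b) = if a.val < k then Nat.pair a.val b.val else Nat.pair a.val a.val := by
    intro a b hab
    simp [C, inf_eq_left.2 hab.le, sup_eq_right.2 hab.le]
  refine ⟨C, ?_, ?_⟩
  · rintro ⟨S, h3, hR, hD⟩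
    have key : ∀ i, ∃ v ∈ S i, v.val < k := by
      intro i
      by_contra! hcon
      have hne : (S i).Nonempty := by rw [← Finset.card_pos, h3]; norm_num
      set a := (S i).min' hne with ha
      have haS : a ∈ S i := Finset.min'_mem _ _
      have h2 : ((S i).erase a).card = 2 := by rw [Finset.card_erase_of_mem haS, h3]
      obtain ⟨b, c, hbc, hE⟩ := Finset.card_eq_two.1 h2
      have hb : b ∈ (S i).erase a := by rw [hE]; simp
      have hc : c ∈ (S i).erase a := by rw [hE]; simp
      rw [Finset.mem_erase] at hb hc
      have hab : a < b := lt_of_le_of_ne (Finset.min'_le _ _ hb.2) hb.1.symm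
      have hac : a < c := lt_of_le_of_ne (Finset.min'_le _ _ hc.2) hc.1.symm
      have hk : ¬ a.val < k := not_lt.2 (hcon a haS)
      have := (hR i).2 a haS b hb.2 a haS c hc.2 hab.ne hac.ne
        (by rw [hC _ _ hab, hC _ _ hac, if_neg hk, if_neg hk])
      exact hbc (Sym2.congr_right.1 this)
    choose f hf hfk using key
    have hinj : Function.Injective (fun i => (⟨(f i).val, hfk i⟩ : Fin k)) := by
      intro i j hij
      by_contra hne
      have hfe : f i = f j := by
        apply Fin.ext
        simpa using hij
      exact Finset.disjoint_left.1 (hD i j hne) (hf i) (hfe ▸ hf j)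
    have := Fintype.card_le_of_injective _ hinj
    simp at this
  · have he : Nat.card (⊤ : SimpleGraph (Fin n)).edgeSet = n.choose 2 := by
      rw [Nat.card_eq_fintype_card, ← SimpleGraph.edgeFinset_card,
        SimpleGraph.card_edgeFinset_top_eq_card_choose_two, Fintype.card_fin]
    let T1 : Finset ℕ := (Finset.range k ×ˢ Finset.Ico k n).image (fun p => Nat.pair p.1 p.2)
    let T2 : Finset ℕ := (Finset.Ico k (n - 1)).image (fun a => Nat.pair a a)
    have h1 : T1.card = k * (n - k) := by
      rw [Finset.card_image_of_injective]
      · simp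
      · rintro ⟨a, b⟩ ⟨c, d⟩ h
        simpa [Nat.pair_eq_pair] using h
    have h2 : T2.card = n - 1 - k := by
      rw [Finset.card_image_of_injective]
      · simp
      · intro a b h
        simpa [Nat.pair_eq_pair] using h
    have hd : Disjoint T1 T2 := by
      rw [Finset.disjoint_left]
      intro x hx hy
      simp only [T1, T2, Finset.mem_image, Finset.mem_product, Finset.mem_range,
        Finset.mem_Ico, Prod.exists] at hx hy
      obtain ⟨a, b, h, rfl⟩ := hx
      obtain ⟨c, h', h''⟩ := hy
      rw [Nat.pair_eq_pair] at h''
      omega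
    have hsub : ((T1 ∪ T2 : Finset ℕ) : Set ℕ) ⊆ C '' (⊤ : SimpleGraph (Fin n)).edgeSet := by
      intro x hx
      simp only [T1, T2, Finset.coe_union, Set.mem_union, Finset.mem_coe, Finset.mem_image,
        Finset.mem_product, Finset.mem_range, Finset.mem_Ico, Prod.exists] at hx
      rcases hx with ⟨a, b, h, rfl⟩ | ⟨a, h, rfl⟩
      · have hlt : (⟨a, by omega⟩ : Fin n) < ⟨b, by omega⟩ := by
          rw [Fin.mk_lt_mk]; omega
        refine ⟨s(⟨a, by omega⟩, ⟨b, by omega⟩), ?_, ?_⟩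
        · rw [SimpleGraph.mem_edgeSet]; exact hlt.ne
        · rw [hC _ _ hlt, if_pos h.1]
      · have hlt : (⟨a, by omega⟩ : Fin n) < ⟨n - 1, by omega⟩ := by
          rw [Fin.mk_lt_mk]; omega
        refine ⟨s(⟨a, by omega⟩, ⟨n - 1, by omega⟩), ?_, ?_⟩
        · rw [SimpleGraph.mem_edgeSet]; exact hlt.ne
        · rw [hC _ _ hlt, if_neg (not_lt.2 h.1)]
    have hcard : k * (n - k) + (n - 1 - k)
        ≤ Nat.card (C '' (⊤ : SimpleGraph (Fin n)).edgeSet) := by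
      rw [← h1, ← h2, ← Finset.card_union_of_disjoint hd, ← Set.ncard_coe_finset]
      exact Set.ncard_le_ncard hsub (Set.toFinite _)
    have hch : (n + 1).choose 2 = n + n.choose 2 := by
      rw [Nat.choose_succ_succ' n 1, Nat.choose_one_right]
    obtain ⟨d, rfl⟩ : ∃ d, n = 5 * (k + 1) + d := ⟨n - 5 * (k + 1), by omega⟩
    have hge : 7 * k + 2 ≤ k * (5 * (k + 1) + d - k) := by
      have : 5 * (k + 1) + d - k = 4 * k + 5 + d := by omega
      rw [this]
      nlinarith [Nat.zero_le (k * d)]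
    rw [he, hch]
    omega
end

section
/- For all m ≥ 1 and n ≥ 3m, there exists an edge coloring of the complete graph K_n using exactly n - 3m + ((3m-1) choose 2) + 1 distinct colors that contains no m pairwise vertex-disjoint rainbow triangles. -/
theorem aux_surj (k t : ℕ) (h : t < k.choose 2) : ∃ a b, a < b ∧ b < k ∧ b.choose 2 + a = t := by
  induction k with
  | zero => simp at h
  | succ k ih =>
    have e : (k+1).choose 2 = k + k.choose 2 := by
      rw [Nat.choose_succ_succ' k 1]; simp
    by_cases h2 : t < k.choose 2
    · obtain ⟨a, b, h3, h4, h5⟩ := ih h2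
      exact ⟨a, b, h3, by omega, h5⟩
    · exact ⟨t - k.choose 2, k, by omega, by omega, by omega⟩

theorem aux_bound (k a b : ℕ) (h : a < b) (hb : b < k) : b.choose 2 + a < k.choose 2 := by
  have e : (b+1).choose 2 = b + b.choose 2 := by
    rw [Nat.choose_succ_succ' b 1]; simp
  have := Nat.choose_le_choose 2 (show b + 1 ≤ k from hb)
  omega

/-- the color of an edge with ends `a`, `b` -/
def auxCol (k d a b : ℕ) : ℕ :=
  if max a b < k then d + 1 + ((max a b).choose 2 + min a b)
  else if min a b < k then 0 else min a b - k + 1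

theorem auxCol_comm (k d a b : ℕ) : auxCol k d a b = auxCol k d b a := by
  unfold auxCol; rw [max_comm, min_comm]

theorem auxCol_lt (k d a b : ℕ) (h : a < b) :
    auxCol k d a b = if b < k then d + 1 + (b.choose 2 + a) else if a < k then 0 else a - k + 1 := by
  unfold auxCol; rw [max_eq_right h.le, min_eq_left h.le]

theorem aux_tri (k d x y z : ℕ) (hxy : x < y) (hyz : y < z) (hz : k ≤ z) :
    auxCol k d x z = auxCol k d y z ∨ auxCol k d x y = auxCol k d x z := by
  rw [auxCol_lt _ _ _ _ hxy, auxCol_lt _ _ _ _ hyz, auxCol_lt _ _ _ _ (hxy.trans hyz)]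
  split_ifs <;> omega

theorem exists_coloring_join_no_disjoint_rainbow_triangles (m n : ℕ) (hm : 1 ≤ m)
    (hn : 3 * m ≤ n) :
    ∃ C : Sym2 (Fin n) → ℕ,
      Nat.card (C '' (⊤ : SimpleGraph (Fin n)).edgeSet)
        = n - 3 * m + (3 * m - 1).choose 2 + 1 ∧
      ¬ ∃ S : Fin m → Finset (Fin n), (∀ i, (S i).card = 3) ∧
          (∀ i, IsRainbowClique (⊤ : SimpleGraph (Fin n)) C (S i)) ∧
          ∀ i j, i ≠ j → Disjoint (S i) (S j) := by
  obtain ⟨k, hk⟩ : ∃ k, k = 3 * m - 1 := ⟨_, rfl⟩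
  obtain ⟨d, hd⟩ : ∃ d, d = n - 3 * m := ⟨_, rfl⟩
  rw [← hk, ← hd]
  refine ⟨Sym2.lift ⟨fun a b => auxCol k d a b, fun a b => auxCol_comm k d a b⟩, ?_, ?_⟩
  · have : (Sym2.lift ⟨fun a b : Fin n => auxCol k d a b, fun a b => auxCol_comm k d a b⟩) ''
        (⊤ : SimpleGraph (Fin n)).edgeSet = ((Finset.range (d + k.choose 2 + 1) : Finset ℕ) : Set ℕ) := by
      ext t
      simp only [Set.mem_image, Finset.coe_range, Set.mem_Iio]
      constructor
      · rintro ⟨e, he, rfl⟩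
        induction e using Sym2.ind with
        | _ a b =>
        simp only [SimpleGraph.mem_edgeSet, SimpleGraph.top_adj] at he
        simp only [Sym2.lift_mk]
        have key : ∀ a b : Fin n, a < b → auxCol k d a b < d + k.choose 2 + 1 := by
          intro a b h
          have h' : (a : ℕ) < b := h
          rw [auxCol_lt _ _ _ _ h']
          split_ifs with h1 h2
          · have := aux_bound k a b h' h1
            omega
          · omega
          · have := b.2
            omega
        rcases lt_or_gt_of_ne he with h | h
        · exact key a b h
        · rw [auxCol_comm]; exact key b a h
      · intro ht
        have key : ∃ a b : ℕ, a < b ∧ b < n ∧ auxCol k d a b = t := by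
          by_cases h0 : t = 0
          · refine ⟨0, k, by omega, by omega, ?_⟩
            rw [auxCol_lt _ _ _ _ (by omega), if_neg (by omega), if_pos (by omega), h0]
          · by_cases h1 : t ≤ d
            · refine ⟨k + t - 1, k + t, by omega, by omega, ?_⟩
              rw [auxCol_lt _ _ _ _ (by omega), if_neg (by omega), if_neg (by omega)]
              omega
            · obtain ⟨a, b, h2, h3, h4⟩ := aux_surj k (t - d - 1) (by omega)
              refine ⟨a, b, h2, by omega, ?_⟩
              rw [auxCol_lt _ _ _ _ h2, if_pos h3]
              omega
        obtain ⟨a, b, h1, h2, h3⟩ := key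
        refine ⟨s(⟨a, by omega⟩, ⟨b, h2⟩), ?_, ?_⟩
        · simp only [SimpleGraph.mem_edgeSet, SimpleGraph.top_adj, ne_eq, Fin.mk.injEq]
          omega
        · simpa using h3
    rw [this]
    simp
  · rintro ⟨S, hS, hR, hD⟩
    have hlt : ∀ i, ∀ z ∈ S i, (z : ℕ) < k := by
      intro i
      by_contra! hcon
      obtain ⟨w, hw, hwk⟩ := hcon
      have key : ∀ x ∈ S i, ∀ y ∈ S i, ∀ z ∈ S i, x < y → y < z → w ≤ z → False := by
        intro x hx y hy z hz hxy hyz hwz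
        have hwz' : (w : ℕ) ≤ z := hwz
        have hxz := hxy.trans hyz
        rcases aux_tri k d x y z hxy hyz (by omega) with h | h
        · have := (hR i).2 x hx z hz y hy z hz hxz.ne hyz.ne (by simpa using h)
          simp only [Sym2.eq_iff] at this
          grind
        · have := (hR i).2 x hx y hy x hx z hz hxy.ne hxz.ne (by simpa using h)
          simp only [Sym2.eq_iff] at this
          grind
      obtain ⟨x, y, z, h1, h2, h3, h4⟩ := Finset.card_eq_three.1 (hS i)
      rw [h4] at key hw
      simp only [Finset.mem_insert, Finset.mem_singleton] at key hw
      have k1 := key x (by simp) y (by simp) z (by simp)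
      have k2 := key x (by simp) z (by simp) y (by simp)
      have k3 := key y (by simp) x (by simp) z (by simp)
      have k4 := key y (by simp) z (by simp) x (by simp)
      have k5 := key z (by simp) x (by simp) y (by simp)
      have k6 := key z (by simp) y (by simp) x (by simp)
      clear key
      grind
    have hc : (Finset.univ.biUnion S).card = m * 3 := by
      rw [Finset.card_biUnion (fun i _ j _ h => hD i j h)]
      simp [hS]
    have hle : ((Finset.univ.biUnion S).image (fun z : Fin n => (z : ℕ))).card ≤ (Finset.range k).card := by
      apply Finset.card_le_card
      intro t ht
      simp only [Finset.mem_image, Finset.mem_biUnion, Finset.mem_univ, true_and] at ht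
      obtain ⟨z, ⟨i, hi⟩, rfl⟩ := ht
      exact Finset.mem_range.2 (hlt i z hi)
    rw [Finset.card_image_of_injective _ Fin.val_injective, hc, Finset.card_range] at hle
    omega
end

section
/- Let G be an edge-colored complete graph, v a vertex of G, and S a finite set of vertices of G with v ∉ S. Suppose there are at least |S| + 2 edges incident to v whose colors are pairwise distinct and each of whose colors is saturated by {v}. Then there exist vertices u, w ∉ S ∪ {v} such that u, v, w form a rainbow triangle. -/
/-- In an edge-colored complete graph, if a vertex `v ∉ S` has at least `|S| + 2` incident
edges with pairwise distinct colors, each of whose colors is saturated by `{v}`, then there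
are vertices `u, w ∉ S ∪ {v}` such that `u, v, w` form a rainbow triangle. -/
theorem rainbow_triangle_avoiding_set {V : Type*} [Fintype V] [DecidableEq V]
    (C : Sym2 V → ℕ) (v : V) (S : Finset V) (hvS : v ∉ S)
    (h : ∃ T : Finset V, v ∉ T ∧ S.card + 2 ≤ T.card ∧
      (∀ u ∈ T, ∀ u' ∈ T, u ≠ u' → C s(v, u) ≠ C s(v, u')) ∧
      ∀ u ∈ T, Saturated (⊤ : SimpleGraph V) C {v} (C s(v, u))) :
    ∃ u w : V, u ∉ S ∧ w ∉ S ∧ u ≠ v ∧ w ≠ v ∧ u ≠ w ∧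
      C s(u, v) ≠ C s(v, w) ∧ C s(u, v) ≠ C s(u, w) ∧ C s(v, w) ≠ C s(u, w) := by
  obtain ⟨T, hvT, hcard, hd, hs⟩ := h
  have h1 : 1 < (T \ S).card := by
    have := Finset.le_card_sdiff S T
    omega
  obtain ⟨u, hu, w, hw, huw⟩ := Finset.one_lt_card.mp h1
  rw [Finset.mem_sdiff] at hu hw
  have huv : u ≠ v := fun e => hvT (e ▸ hu.1)
  have hwv : w ≠ v := fun e => hvT (e ▸ hw.1)
  have key : ∀ x ∈ T, C s(u, w) ≠ C s(v, x) := by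
    intro x hx he
    obtain ⟨y, hy, hy'⟩ := hs x hx s(u, w) (by simpa using huw) he
    rw [Set.mem_singleton_iff] at hy
    subst hy
    rcases Sym2.mem_iff.mp hy' with e | e
    · exact huv e.symm
    · exact hwv e.symm
  refine ⟨u, w, hu.2, hw.2, huv, hwv, huw, ?_, ?_, (key w hw.1).symm⟩
  · rw [Sym2.eq_swap]
    exact hd u hu.1 w hw.1 huw
  · rw [Sym2.eq_swap (a := u) (b := v)]
    exact (key u hu.1).symm
end
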